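/- arXiv:2209.10940 — 2 statements merged into one kernel-verified Lean document; each statement's English description precedes it below -/
import Mathlib

section
/- If a closed scheme Φ(P₁,…,Pₙ) is absolutely realizable, then for any list of schemes Ψ₁,…,Ψₙ acceptable for substitution in Φ(P₁,…,Pₙ), the universal closure of the substitutional instance Φ(Ψ₁,…,Ψₙ) is absolutely realizable. -/
set_option linter.unusedVariables false

namespace Cpc

/-! ### Recursion-theoretic preliminaries -/

/-- Kleene application `{e}(a)`: the unary partial recursive function with Gödel number `e`,
applied to `a`. -/
def K (e a : ℕ) : Part ℕ := Nat.Partrec.Code.eval (Denumerable.ofNat Nat.Partrec.Code e) a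

/-- `(e)ᵢ`: the exponent of the `i`-th prime in the prime factorization of `e`. -/
noncomputable def pexp (i e : ℕ) : ℕ := Nat.factorization e (Nat.nth Nat.Prime i)

/-! ### The Cantor pairing function and the enumeration `g` of finitely supported functions -/

/-- The Cantor pairing `c(x,y) = (x+y)(x+y+1)/2 + x`. -/
def cpair (x y : ℕ) : ℕ := (x + y) * (x + y + 1) / 2 + x

/-- Simultaneous computation of the two inverse projections of the Cantor pairing. -/
def lrAux : ℕ → ℕ × ℕ
  | 0 => (0, 0)
  | n + 1 =>
    let p := lrAux n
    if p.2 = 0 then (0, p.1 + 1) else (p.1 + 1, p.2 - 1)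

/-- The first projection `l` of the Cantor pairing. -/
def cl (n : ℕ) : ℕ := (lrAux n).1

/-- The second projection `r` of the Cantor pairing. -/
def cr (n : ℕ) : ℕ := (lrAux n).2

/-- `l*(x,y)`: `l*(x,0) = x`, `l*(x,y+1) = l(l*(x,y))`. -/
def lstar (x : ℕ) : ℕ → ℕ
  | 0 => x
  | y + 1 => cl (lstar x y)

/-- `g(x,y) = r(l*(x,y))`: the enumeration of all finitely supported functions `ℕ → ℕ`. -/
def g (x y : ℕ) : ℕ := cr (lstar x y)

/-- `h(x,y,0) = c(l(x),y)`, `h(x,y,z+1) = c(h(l(x),y,z), r(x))`. -/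
def h : ℕ → ℕ → ℕ → ℕ
  | x, y, 0 => cpair (cl x) y
  | x, y, z + 1 => cpair (h (cl x) y z) (cr x)


/-! ### The predicate language `L*` -/

/-- Individual terms of the language `L*`: individual variables (named by natural numbers)
and individual constants for all natural numbers. -/
inductive PTerm : Type
  | var (v : ℕ)
  | const (c : ℕ)
  deriving DecidableEq

/-- Evaluation of a term under a valuation of the individual variables. -/
def PTerm.eval (ρ : ℕ → ℕ) : PTerm → ℕ
  | var v => ρ v
  | const c => c

/-- The (free) variables of a term. -/
def PTerm.fv : PTerm → Finset ℕ
  | var v => {v}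
  | const _ => ∅

/-- Formulas of the predicate language `L*`: `⊥`, atomic formulas `Pⁿᵢ(t₁,…,tₙ)`
(where the predicate variable `Pⁿᵢ` is recorded by its index `i`; its arity `n` is the
length of the argument list), and the connectives and quantifiers. -/
inductive PFml : Type
  | bot
  | atom (i : ℕ) (args : List PTerm)
  | and (φ ψ : PFml)
  | or (φ ψ : PFml)
  | imp (φ ψ : PFml)
  | all (x : ℕ) (φ : PFml)
  | ex (x : ℕ) (φ : PFml)

/-- `¬Φ` abbreviates `Φ → ⊥`. -/
def PFml.not (φ : PFml) : PFml := φ.imp .bot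

/-- `Φ ↔ Ψ` abbreviates `(Φ → Ψ) & (Ψ → Φ)`. -/
def PFml.iff (φ ψ : PFml) : PFml := (φ.imp ψ).and (ψ.imp φ)

/-- Conjunction of a list of formulas. -/
def bigAnd (l : List PFml) : PFml := l.foldr PFml.and (PFml.bot.imp PFml.bot)

/-- The free variables of a formula. -/
def PFml.fv : PFml → Finset ℕ
  | bot => ∅
  | atom _ args => args.foldr (fun t s => t.fv ∪ s) ∅
  | and φ ψ => φ.fv ∪ ψ.fv
  | or φ ψ => φ.fv ∪ ψ.fv
  | imp φ ψ => φ.fv ∪ ψ.fv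
  | all x φ => φ.fv.erase x
  | ex x φ => φ.fv.erase x

/-- The bound variables of a formula. -/
def PFml.bv : PFml → Finset ℕ
  | bot => ∅
  | atom _ _ => ∅
  | and φ ψ => φ.bv ∪ ψ.bv
  | or φ ψ => φ.bv ∪ ψ.bv
  | imp φ ψ => φ.bv ∪ ψ.bv
  | all x φ => insert x φ.bv
  | ex x φ => insert x φ.bv

/-- A formula is closed if it has no free variables. -/
def PFml.Closed (φ : PFml) : Prop := φ.fv = ∅

/-- Simultaneous substitution of terms for variables in a term. -/
def PTerm.msub (s : ℕ → PTerm) : PTerm → PTerm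
  | var v => s v
  | const c => const c

/-- Simultaneous (naive, i.e. non-capture-avoiding) substitution of terms for the free
occurrences of variables in a formula. -/
def PFml.msub (s : ℕ → PTerm) : PFml → PFml
  | bot => bot
  | atom i args => atom i (args.map (PTerm.msub s))
  | and φ ψ => (φ.msub s).and (ψ.msub s)
  | or φ ψ => (φ.msub s).or (ψ.msub s)
  | imp φ ψ => (φ.msub s).imp (ψ.msub s)
  | all x φ => all x (φ.msub fun v => if v = x then .var x else s v)
  | ex x φ => ex x (φ.msub fun v => if v = x then .var x else s v)

/-- The substitution replacing the single variable `x` by the term `t`. -/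
def sub1 (x : ℕ) (t : PTerm) : ℕ → PTerm := fun v => if v = x then t else .var v

/-- The simultaneous substitution `s` is free for (admissible in) the formula, i.e. no
variable of a substituted term gets captured by a quantifier. -/
def PFml.FreeForM (s : ℕ → PTerm) : PFml → Prop
  | bot => True
  | atom _ _ => True
  | and φ ψ => φ.FreeForM s ∧ ψ.FreeForM s
  | or φ ψ => φ.FreeForM s ∧ ψ.FreeForM s
  | imp φ ψ => φ.FreeForM s ∧ ψ.FreeForM s
  | all x φ => (∀ v ∈ φ.fv, v ≠ x → x ∉ (s v).fv) ∧
      φ.FreeForM (fun v => if v = x then .var x else s v)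
  | ex x φ => (∀ v ∈ φ.fv, v ≠ x → x ∉ (s v).fv) ∧
      φ.FreeForM (fun v => if v = x then .var x else s v)

/-! ### Interpretations and realizability -/

/-- An `n`-ary generalized predicate. -/
def GenPred (n : ℕ) : Type := (Fin n → ℕ) → Set ℕ

/-- An interpretation assigns to each predicate variable `Pⁿᵢ` an `n`-ary generalized
predicate. -/
def Interp : Type := (n : ℕ) → ℕ → GenPred n

/-- The realizability relation `e rᶠ Φ` (relative to a valuation `ρ` of the individual
variables). -/
def Realizes (f : Interp) : (ℕ → ℕ) → ℕ → PFml → Prop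
  | _, _, .bot => False
  | ρ, e, .atom i args => e ∈ f args.length i (fun j => (args.get j).eval ρ)
  | ρ, e, .and φ ψ => Realizes f ρ (pexp 0 e) φ ∧ Realizes f ρ (pexp 1 e) ψ
  | ρ, e, .or φ ψ => (pexp 0 e = 0 ∧ Realizes f ρ (pexp 1 e) φ) ∨
      (pexp 0 e = 1 ∧ Realizes f ρ (pexp 1 e) ψ)
  | ρ, e, .imp φ ψ => ∀ a, Realizes f ρ a φ → ∃ b ∈ K e a, Realizes f ρ b ψ
  | ρ, e, .all x φ => ∀ a, ∃ b ∈ K e a, Realizes f (Function.update ρ x a) b φ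
  | ρ, e, .ex x φ => Realizes f (Function.update ρ x (pexp 0 e)) (pexp 1 e) φ

/-- The zero valuation, used for closed formulas. -/
def rho0 : ℕ → ℕ := fun _ => 0

/-- The closed formula `Φ` is realizable in the interpretation `f`. -/
def FRealizable (f : Interp) (φ : PFml) : Prop := ∃ e, Realizes f rho0 e φ

/-- The closed predicate formula `Φ` is (uniformly) absolutely realizable. -/
def AbsRealizable (φ : PFml) : Prop := ∃ e, ∀ f : Interp, Realizes f rho0 e φ


/-! ### The arithmetical fragment: `Z,E,S,A,M` are the predicate variables
`P¹₀, P²₀, P²₁, P³₀, P³₁`. -/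

/-- `Z(t)`, i.e. the atomic formula `P¹₀(t)`. -/
def vZ (t : PTerm) : PFml := .atom 0 [t]
/-- `E(t,u)`, i.e. `P²₀(t,u)`. -/
def vE (t u : PTerm) : PFml := .atom 0 [t, u]
/-- `S(t,u)`, i.e. `P²₁(t,u)`. -/
def vS (t u : PTerm) : PFml := .atom 1 [t, u]
/-- `A(t,u,w)`, i.e. `P³₀(t,u,w)`. -/
def vA (t u w : PTerm) : PFml := .atom 0 [t, u, w]
/-- `M(t,u,w)`, i.e. `P³₁(t,u,w)`. -/
def vM (t u w : PTerm) : PFml := .atom 1 [t, u, w]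

/-- The standard reading of the arithmetical predicate symbols. -/
def arithStd : (n : ℕ) → ℕ → (Fin n → ℕ) → Prop
  | 1, 0, v => v 0 = 0
  | 2, 0, v => v 0 = v 1
  | 2, 1, v => v 0 + 1 = v 1
  | 3, 0, v => v 0 + v 1 = v 2
  | 3, 1, v => v 0 * v 1 = v 2
  | _, _, _ => False

/-- The standard interpretation: an atomic arithmetical statement is realized by `e`
iff `e = 0` and the statement is true. -/
def stdInterp : Interp := fun n i v => {e | e = 0 ∧ arithStd n i v}

/-- Classical truth of an arithmetical formula in the standard model (atoms of
non-arithmetical predicate variables are read as false). -/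
def TrueStd : (ℕ → ℕ) → PFml → Prop
  | _, .bot => False
  | ρ, .atom i args => arithStd args.length i (fun j => (args.get j).eval ρ)
  | ρ, .and φ ψ => TrueStd ρ φ ∧ TrueStd ρ ψ
  | ρ, .or φ ψ => TrueStd ρ φ ∨ TrueStd ρ ψ
  | ρ, .imp φ ψ => TrueStd ρ φ → TrueStd ρ ψ
  | ρ, .all x φ => ∀ a, TrueStd (Function.update ρ x a) φ
  | ρ, .ex x φ => ∃ a, TrueStd (Function.update ρ x a) φ

/-- The pairs (arity, index) naming the arithmetical predicate symbols `Z,E,S,A,M`. -/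
def arithSlot (n i : ℕ) : Prop := (n = 1 ∧ i = 0) ∨ (n = 2 ∧ i ≤ 1) ∨ (n = 3 ∧ i ≤ 1)

/-- The `Ar`-formula `x ≤ t`, i.e. `∃z A(z,x,t)`. -/
def leF (z x : ℕ) (t : PTerm) : PFml := .ex z (vA (.var z) (.var x) t)

/-- `Δ₀`-formulas of the language `Ar`. -/
inductive IsDelta0 : PFml → Prop
  | bot : IsDelta0 .bot
  | atom {i : ℕ} {args : List PTerm} : arithSlot args.length i → IsDelta0 (.atom i args)
  | and {φ ψ} : IsDelta0 φ → IsDelta0 ψ → IsDelta0 (φ.and ψ)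
  | or {φ ψ} : IsDelta0 φ → IsDelta0 ψ → IsDelta0 (φ.or ψ)
  | imp {φ ψ} : IsDelta0 φ → IsDelta0 ψ → IsDelta0 (φ.imp ψ)
  | ball {x z : ℕ} {t : PTerm} {φ} : x ∉ t.fv → z ∉ t.fv → z ≠ x → IsDelta0 φ →
      IsDelta0 (.all x ((leF z x t).imp φ))
  | bex {x z : ℕ} {t : PTerm} {φ} : x ∉ t.fv → z ∉ t.fv → z ≠ x → IsDelta0 φ →
      IsDelta0 (.ex x ((leF z x t).and φ))

/-- `Σ`-formulas of the language `Ar`. -/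
inductive IsSigma : PFml → Prop
  | delta0 {φ} : IsDelta0 φ → IsSigma φ
  | and {φ ψ} : IsSigma φ → IsSigma ψ → IsSigma (φ.and ψ)
  | or {φ ψ} : IsSigma φ → IsSigma ψ → IsSigma (φ.or ψ)
  | ball {x z : ℕ} {t : PTerm} {φ} : x ∉ t.fv → z ∉ t.fv → z ≠ x → IsSigma φ →
      IsSigma (.all x ((leF z x t).imp φ))
  | bex {x z : ℕ} {t : PTerm} {φ} : x ∉ t.fv → z ∉ t.fv → z ≠ x → IsSigma φ →
      IsSigma (.ex x ((leF z x t).and φ))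
  | ex {x : ℕ} {φ} : IsSigma φ → IsSigma (.ex x φ)




/-- Iterated universal quantification. -/
def alls (xs : List ℕ) (φ : PFml) : PFml := xs.foldr PFml.all φ

open PTerm (var const) in
/-- The axioms `A₁ – A₂₅` of the predicate version `IRA*` of intuitionistic Robinson
arithmetic. -/
def IRAstarAxioms : List PFml := [
  alls [0,1,2] (((vS (var 0) (var 2)).and (vS (var 1) (var 2))).imp (vE (var 0) (var 1))),
  alls [0,1] ((vS (var 0) (var 1)).imp (vZ (var 1)).not),
  alls [0,1,2] (((vE (var 0) (var 1)).and (vE (var 0) (var 2))).imp (vE (var 1) (var 2))),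
  alls [0,1,2] (((vE (var 0) (var 1)).and (vS (var 0) (var 2))).imp (vS (var 1) (var 2))),
  alls [0,1] ((vZ (var 1)).imp (vA (var 0) (var 1) (var 0))),
  alls [0,1,2,3,4] ((((vS (var 1) (var 2)).and (vA (var 0) (var 1) (var 3))).and
      (vS (var 3) (var 4))).imp (vA (var 0) (var 2) (var 4))),
  alls [0,1] ((vZ (var 1)).imp (vM (var 0) (var 1) (var 1))),
  alls [0,1,2,3,4] ((((vS (var 1) (var 2)).and (vM (var 0) (var 1) (var 3))).and
      (vA (var 3) (var 0) (var 4))).imp (vM (var 0) (var 2) (var 4))),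
  alls [0,1,2,3] (((vE (var 0) (var 1)).and (vA (var 0) (var 2) (var 3))).imp
      (vA (var 1) (var 2) (var 3))),
  alls [0,1,2,3] (((vE (var 1) (var 2)).and (vA (var 0) (var 1) (var 3))).imp
      (vA (var 0) (var 2) (var 3))),
  alls [0,1,2,3] (((vE (var 0) (var 1)).and (vM (var 0) (var 2) (var 3))).imp
      (vM (var 1) (var 2) (var 3))),
  alls [0,1,2,3] (((vE (var 1) (var 2)).and (vM (var 0) (var 1) (var 3))).imp
      (vM (var 0) (var 2) (var 3))),
  PFml.all 0 ((vZ (var 0)).or (.ex 1 (vS (var 1) (var 0)))),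
  PFml.ex 0 (vZ (var 0)),
  alls [0,1] (((vZ (var 0)).and (vZ (var 1))).imp (vE (var 0) (var 1))),
  alls [0,1] (((vE (var 0) (var 1)).and (vZ (var 0))).imp (vZ (var 1))),
  PFml.all 0 (.ex 1 (vS (var 0) (var 1))),
  alls [0,1,2] (((vS (var 0) (var 1)).and (vS (var 0) (var 2))).imp (vE (var 1) (var 2))),
  alls [0,1,2] (((vS (var 0) (var 1)).and (vE (var 1) (var 2))).imp (vS (var 0) (var 2))),
  alls [0,1] (.ex 2 (vA (var 0) (var 1) (var 2))),
  alls [0,1,2,3] (((vA (var 0) (var 1) (var 2)).and (vA (var 0) (var 1) (var 3))).imp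
      (vE (var 2) (var 3))),
  alls [0,1,2,3] (((vA (var 0) (var 1) (var 2)).and (vE (var 2) (var 3))).imp
      (vA (var 0) (var 1) (var 3))),
  alls [0,1] (.ex 2 (vM (var 0) (var 1) (var 2))),
  alls [0,1,2,3] (((vM (var 0) (var 1) (var 2)).and (vM (var 0) (var 1) (var 3))).imp
      (vE (var 2) (var 3))),
  alls [0,1,2,3] (((vM (var 0) (var 1) (var 2)).and (vE (var 2) (var 3))).imp
      (vM (var 0) (var 1) (var 3)))]

/-- `A₂₆`: functionality of the formula `G`:
`∀x,y,z₁,z₂ (G(x,y,z₁) & G(x,y,z₂) → E(z₁,z₂))`. Here `G = G(x,y,z)` has distinguished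
free variables `0,1,2` playing the role of `x,y,z`. -/
def A26 (G : PFml) : PFml :=
  alls [0,1,2,3] ((G.and (G.msub (sub1 2 (.var 3)))).imp (vE (.var 2) (.var 3)))

/-- `H(y,x)`, i.e. `∃w(Z(w) & G(y,x,w))`, expressing `{y}(x) = 0`; here `y,x` are the
variables `1,0` and `w` is the fresh variable `5`. -/
def Hfml (G : PFml) : PFml :=
  .ex 5 ((vZ (.var 5)).and (G.msub fun v =>
    if v = 0 then .var 1 else if v = 1 then .var 0 else if v = 2 then .var 5 else .var v))

/-- `B(v,x)` with `v,x` the variables `4,0`; here `B = B(v,x)` has distinguished free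
variables `0,1` playing the role of `v,x`. -/
def B40 (B : PFml) : PFml :=
  B.msub fun v => if v = 0 then .var 4 else if v = 1 then .var 0 else .var v

/-- `A₂₇`: `∀y,z ¬¬∃v ∀x (x ≤ z → (B(v,x) ↔ H(y,x)))`. -/
def A27 (G B : PFml) : PFml :=
  alls [1,2] (PFml.not (PFml.not (.ex 4 (.all 0
    ((leF 6 0 (.var 2)).imp ((B40 B).iff (Hfml G)))))))

/-- `A₂₈`: `∀x,y (B(x,y) ∨ ¬B(x,y))`. -/
def A28 (B : PFml) : PFml := alls [0,1] (B.or B.not)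

/-- `Q`: the conjunction of the formulas `A₁ – A₂₈`. -/
def Qfml (G B : PFml) : PFml := bigAnd (IRAstarAxioms ++ [A26 G, A27 G B, A28 B])

/-- The formula `[n](t)`: `[0](t) = Z(t)`, `[n+1](t) = ∃xₙ([n](xₙ) & S(xₙ,t))`. -/
def numFt : ℕ → PTerm → PFml
  | 0, t => vZ t
  | n + 1, t => .ex n ((numFt n (.var n)).and (vS (.var n) t))



/-- The axiom of equality for the predicate variable `Pⁿᵢ`:
`∀x⃗ ∀y⃗ (E(x₁,y₁) & … & E(xₙ,yₙ) → (P(x⃗) → P(y⃗)))`. -/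
def eqAx (n i : ℕ) : PFml :=
  alls ((List.range n) ++ (List.range n).map (· + n))
    ((bigAnd ((List.range n).map fun j => vE (.var j) (.var (n + j)))).imp
      ((PFml.atom i ((List.range n).map PTerm.var)).imp
        (PFml.atom i ((List.range n).map fun j => PTerm.var (n + j)))))




/-- Schemes over the arithmetical language: formulas of the language `LS*`, whose
atoms are either arithmetical atoms built from the predicate symbols `Z,E,S,A,M` of
`Ar`, or atoms built from the predicate variables `Pⁿᵢ`. -/
inductive Scheme : Type
  | bot
  | sZ (t : PTerm)
  | sE (t u : PTerm)
  | sS (t u : PTerm)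
  | sA (t u w : PTerm)
  | sM (t u w : PTerm)
  | patom (i : ℕ) (args : List PTerm)
  | and (φ ψ : Scheme)
  | or (φ ψ : Scheme)
  | imp (φ ψ : Scheme)
  | all (x : ℕ) (φ : Scheme)
  | ex (x : ℕ) (φ : Scheme)

def Scheme.not (φ : Scheme) : Scheme := φ.imp .bot
def Scheme.iff (φ ψ : Scheme) : Scheme := (φ.imp ψ).and (ψ.imp φ)

def Scheme.fv : Scheme → Finset ℕ
  | bot => ∅
  | sZ t => t.fv
  | sE t u => t.fv ∪ u.fv
  | sS t u => t.fv ∪ u.fv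
  | sA t u w => t.fv ∪ u.fv ∪ w.fv
  | sM t u w => t.fv ∪ u.fv ∪ w.fv
  | patom _ args => args.foldr (fun t s => t.fv ∪ s) ∅
  | and φ ψ => φ.fv ∪ ψ.fv
  | or φ ψ => φ.fv ∪ ψ.fv
  | imp φ ψ => φ.fv ∪ ψ.fv
  | all x φ => φ.fv.erase x
  | ex x φ => φ.fv.erase x

/-- All individual variables occurring in a scheme (free or bound). -/
def Scheme.vars : Scheme → Finset ℕ
  | bot => ∅
  | sZ t => t.fv
  | sE t u => t.fv ∪ u.fv
  | sS t u => t.fv ∪ u.fv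
  | sA t u w => t.fv ∪ u.fv ∪ w.fv
  | sM t u w => t.fv ∪ u.fv ∪ w.fv
  | patom _ args => args.foldr (fun t s => t.fv ∪ s) ∅
  | and φ ψ => φ.vars ∪ ψ.vars
  | or φ ψ => φ.vars ∪ ψ.vars
  | imp φ ψ => φ.vars ∪ ψ.vars
  | all x φ => insert x φ.vars
  | ex x φ => insert x φ.vars

def Scheme.bv : Scheme → Finset ℕ
  | and φ ψ => φ.bv ∪ ψ.bv
  | or φ ψ => φ.bv ∪ ψ.bv
  | imp φ ψ => φ.bv ∪ ψ.bv
  | all x φ => insert x φ.bv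
  | ex x φ => insert x φ.bv
  | _ => ∅

def Scheme.Closed (φ : Scheme) : Prop := φ.fv = ∅

/-- The predicate variables (arity, index) occurring in a scheme. -/
def Scheme.pvars : Scheme → Finset (ℕ × ℕ)
  | patom i args => {(args.length, i)}
  | and φ ψ => φ.pvars ∪ ψ.pvars
  | or φ ψ => φ.pvars ∪ ψ.pvars
  | imp φ ψ => φ.pvars ∪ ψ.pvars
  | all _ φ => φ.pvars
  | ex _ φ => φ.pvars
  | _ => ∅

def Scheme.msub (s : ℕ → PTerm) : Scheme → Scheme
  | bot => bot
  | sZ t => sZ (t.msub s)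
  | sE t u => sE (t.msub s) (u.msub s)
  | sS t u => sS (t.msub s) (u.msub s)
  | sA t u w => sA (t.msub s) (u.msub s) (w.msub s)
  | sM t u w => sM (t.msub s) (u.msub s) (w.msub s)
  | patom i args => patom i (args.map (PTerm.msub s))
  | and φ ψ => (φ.msub s).and (ψ.msub s)
  | or φ ψ => (φ.msub s).or (ψ.msub s)
  | imp φ ψ => (φ.msub s).imp (ψ.msub s)
  | all x φ => all x (φ.msub fun v => if v = x then .var x else s v)
  | ex x φ => ex x (φ.msub fun v => if v = x then .var x else s v)

def Scheme.FreeForM (s : ℕ → PTerm) : Scheme → Prop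
  | and φ ψ => φ.FreeForM s ∧ ψ.FreeForM s
  | or φ ψ => φ.FreeForM s ∧ ψ.FreeForM s
  | imp φ ψ => φ.FreeForM s ∧ ψ.FreeForM s
  | all x φ => (∀ v ∈ φ.fv, v ≠ x → x ∉ (s v).fv) ∧
      φ.FreeForM (fun v => if v = x then .var x else s v)
  | ex x φ => (∀ v ∈ φ.fv, v ≠ x → x ∉ (s v).fv) ∧
      φ.FreeForM (fun v => if v = x then .var x else s v)
  | _ => True

/-- Realizability of schemes: arithmetical atoms are realized by `e` iff `e = 0` and the
atom is true in the standard model; atoms of predicate variables are interpreted by `f`. -/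
def SReal (f : Interp) : (ℕ → ℕ) → ℕ → Scheme → Prop
  | _, _, .bot => False
  | ρ, e, .sZ t => e = 0 ∧ t.eval ρ = 0
  | ρ, e, .sE t u => e = 0 ∧ t.eval ρ = u.eval ρ
  | ρ, e, .sS t u => e = 0 ∧ t.eval ρ + 1 = u.eval ρ
  | ρ, e, .sA t u w => e = 0 ∧ t.eval ρ + u.eval ρ = w.eval ρ
  | ρ, e, .sM t u w => e = 0 ∧ t.eval ρ * u.eval ρ = w.eval ρ
  | ρ, e, .patom i args => e ∈ f args.length i (fun j => (args.get j).eval ρ)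
  | ρ, e, .and φ ψ => SReal f ρ (pexp 0 e) φ ∧ SReal f ρ (pexp 1 e) ψ
  | ρ, e, .or φ ψ => (pexp 0 e = 0 ∧ SReal f ρ (pexp 1 e) φ) ∨
      (pexp 0 e = 1 ∧ SReal f ρ (pexp 1 e) ψ)
  | ρ, e, .imp φ ψ => ∀ a, SReal f ρ a φ → ∃ b ∈ K e a, SReal f ρ b ψ
  | ρ, e, .all x φ => ∀ a, ∃ b ∈ K e a, SReal f (Function.update ρ x a) b φ
  | ρ, e, .ex x φ => SReal f (Function.update ρ x (pexp 0 e)) (pexp 1 e) φ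

/-- A closed scheme is uniformly absolutely realizable if a single `e` realizes it in
every interpretation. -/
def AbsRealizableS (φ : Scheme) : Prop := ∃ e, ∀ f : Interp, SReal f rho0 e φ

/-- Classical truth of a scheme with no predicate variables (arithmetical formula)
in the standard model. -/
def STrue : (ℕ → ℕ) → Scheme → Prop
  | _, .bot => False
  | ρ, .sZ t => t.eval ρ = 0
  | ρ, .sE t u => t.eval ρ = u.eval ρ
  | ρ, .sS t u => t.eval ρ + 1 = u.eval ρ
  | ρ, .sA t u w => t.eval ρ + u.eval ρ = w.eval ρ
  | ρ, .sM t u w => t.eval ρ * u.eval ρ = w.eval ρ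
  | _, .patom _ _ => False
  | ρ, .and φ ψ => STrue ρ φ ∧ STrue ρ ψ
  | ρ, .or φ ψ => STrue ρ φ ∨ STrue ρ ψ
  | ρ, .imp φ ψ => STrue ρ φ → STrue ρ ψ
  | ρ, .all x φ => ∀ a, STrue (Function.update ρ x a) φ
  | ρ, .ex x φ => ∃ a, STrue (Function.update ρ x a) φ

/-- `x ≤ t` in the scheme language: `∃z A(z,x,t)`. -/
def leS (z x : ℕ) (t : PTerm) : Scheme := .ex z (.sA (.var z) (.var x) t)

/-- `Δ₀`-formulas of `Ar` (as schemes). -/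
inductive IsDelta0S : Scheme → Prop
  | bot : IsDelta0S .bot
  | sZ (t) : IsDelta0S (.sZ t)
  | sE (t u) : IsDelta0S (.sE t u)
  | sS (t u) : IsDelta0S (.sS t u)
  | sA (t u w) : IsDelta0S (.sA t u w)
  | sM (t u w) : IsDelta0S (.sM t u w)
  | and {φ ψ} : IsDelta0S φ → IsDelta0S ψ → IsDelta0S (φ.and ψ)
  | or {φ ψ} : IsDelta0S φ → IsDelta0S ψ → IsDelta0S (φ.or ψ)
  | imp {φ ψ} : IsDelta0S φ → IsDelta0S ψ → IsDelta0S (φ.imp ψ)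
  | ball {x z : ℕ} {t : PTerm} {φ} : x ∉ t.fv → z ∉ t.fv → z ≠ x → IsDelta0S φ →
      IsDelta0S (.all x ((leS z x t).imp φ))
  | bex {x z : ℕ} {t : PTerm} {φ} : x ∉ t.fv → z ∉ t.fv → z ≠ x → IsDelta0S φ →
      IsDelta0S (.ex x ((leS z x t).and φ))

/-- `Σ`-formulas of `Ar` (as schemes). -/
inductive IsSigmaS : Scheme → Prop
  | delta0 {φ} : IsDelta0S φ → IsSigmaS φ
  | and {φ ψ} : IsSigmaS φ → IsSigmaS ψ → IsSigmaS (φ.and ψ)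
  | or {φ ψ} : IsSigmaS φ → IsSigmaS ψ → IsSigmaS (φ.or ψ)
  | ball {x z : ℕ} {t : PTerm} {φ} : x ∉ t.fv → z ∉ t.fv → z ≠ x → IsSigmaS φ →
      IsSigmaS (.all x ((leS z x t).imp φ))
  | bex {x z : ℕ} {t : PTerm} {φ} : x ∉ t.fv → z ∉ t.fv → z ≠ x → IsSigmaS φ →
      IsSigmaS (.ex x ((leS z x t).and φ))
  | ex {x : ℕ} {φ} : IsSigmaS φ → IsSigmaS (.ex x φ)

/-- `Φ[c]`: replace each atom `Pⁿᵢ(t₁,…,tₙ)` of a predicate variable by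
`Pⁿ⁺¹ᵢ(c,t₁,…,tₙ)` (arithmetical atoms are unchanged). -/
def Scheme.bracketC (c : ℕ) : Scheme → Scheme
  | patom i args => patom i (.const c :: args)
  | and φ ψ => (φ.bracketC c).and (ψ.bracketC c)
  | or φ ψ => (φ.bracketC c).or (ψ.bracketC c)
  | imp φ ψ => (φ.bracketC c).imp (ψ.bracketC c)
  | all x φ => all x (φ.bracketC c)
  | ex x φ => ex x (φ.bracketC c)
  | φ => φ

/-- `Φ[z]` for a variable `z`: replace each atom `Pⁿᵢ(t₁,…,tₙ)` of a predicate variable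
by `Pⁿ⁺¹ᵢ(z,t₁,…,tₙ)`. -/
def Scheme.bracketV (z : ℕ) : Scheme → Scheme
  | patom i args => patom i (.var z :: args)
  | and φ ψ => (φ.bracketV z).and (ψ.bracketV z)
  | or φ ψ => (φ.bracketV z).or (ψ.bracketV z)
  | imp φ ψ => (φ.bracketV z).imp (ψ.bracketV z)
  | all x φ => all x (φ.bracketV z)
  | ex x φ => ex x (φ.bracketV z)
  | φ => φ

/-- The interpretation `f_c`: `f_c(Pⁿᵢ)(k₁,…,kₙ) = f(Pⁿ⁺¹ᵢ)(c,k₁,…,kₙ)`. -/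
def interpCons (c : ℕ) (f : Interp) : Interp := fun n i v => f (n + 1) i (Fin.cons c v)

/-- Does the predicate variable `Pⁿᵢ` occur in the scheme? -/
def Scheme.occursP (n i : ℕ) : Scheme → Prop
  | patom j args => j = i ∧ args.length = n
  | and φ ψ => φ.occursP n i ∨ ψ.occursP n i
  | or φ ψ => φ.occursP n i ∨ ψ.occursP n i
  | imp φ ψ => φ.occursP n i ∨ ψ.occursP n i
  | all _ φ => φ.occursP n i
  | ex _ φ => φ.occursP n i
  | _ => False

/-- The substitution of the terms `args` for the distinguished variables `x₁,…,xₙ`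
(named `0,…,n-1`). -/
def argSub (args : List PTerm) : ℕ → PTerm :=
  fun v => if h : v < args.length then args.get ⟨v, h⟩ else .var v

/-- Substitution of schemes for predicate variables: each atom `Pⁿᵢ(t₁,…,tₙ)` is
replaced by the result of simultaneously substituting `t₁,…,tₙ` for the distinguished
variables `0,…,n-1` of the scheme `σ n i`. -/
def Scheme.substP (σ : ℕ → ℕ → Scheme) : Scheme → Scheme
  | patom i args => (σ args.length i).msub (argSub args)
  | and φ ψ => (φ.substP σ).and (ψ.substP σ)
  | or φ ψ => (φ.substP σ).or (ψ.substP σ)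
  | imp φ ψ => (φ.substP σ).imp (ψ.substP σ)
  | all x φ => all x (φ.substP σ)
  | ex x φ => ex x (φ.substP σ)
  | φ => φ

/-- The list of schemes `σ` is acceptable for substitution in the given scheme:
(1) at every atom of a predicate variable the substitution of the argument terms
for the distinguished variables is capture-free, and (2) no atom of a predicate
variable lies in the scope of a quantifier binding a "superfluous" parameter of the
scheme substituted for that variable. -/
def Scheme.Acceptable (σ : ℕ → ℕ → Scheme) : Scheme → Prop
  | patom i args => (σ args.length i).FreeForM (argSub args)
  | and φ ψ => φ.Acceptable σ ∧ ψ.Acceptable σ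
  | or φ ψ => φ.Acceptable σ ∧ ψ.Acceptable σ
  | imp φ ψ => φ.Acceptable σ ∧ ψ.Acceptable σ
  | all x φ => (∀ n i, φ.occursP n i → x ∉ (σ n i).fv \ Finset.range n) ∧ φ.Acceptable σ
  | ex x φ => (∀ n i, φ.occursP n i → x ∉ (σ n i).fv \ Finset.range n) ∧ φ.Acceptable σ
  | _ => True

/-- The universal closure of a scheme. -/
def Scheme.univClosure (φ : Scheme) : Scheme :=
  (φ.fv.sort (· ≤ ·)).foldr Scheme.all φ




/-- Natural deduction for the intuitionistic predicate calculus `IQC` in the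
language `L*`. -/
inductive IQC : List PFml → PFml → Prop
  | hyp {Γ : List PFml} {φ : PFml} : φ ∈ Γ → IQC Γ φ
  | botE {Γ φ} : IQC Γ .bot → IQC Γ φ
  | andI {Γ : List PFml} {φ ψ : PFml} : IQC Γ φ → IQC Γ ψ → IQC Γ (φ.and ψ)
  | andE1 {Γ : List PFml} {φ ψ : PFml} : IQC Γ (φ.and ψ) → IQC Γ φ
  | andE2 {Γ : List PFml} {φ ψ : PFml} : IQC Γ (φ.and ψ) → IQC Γ ψ
  | orI1 {Γ : List PFml} {φ ψ : PFml} : IQC Γ φ → IQC Γ (φ.or ψ)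
  | orI2 {Γ : List PFml} {φ ψ : PFml} : IQC Γ ψ → IQC Γ (φ.or ψ)
  | orE {Γ φ ψ χ} : IQC Γ (φ.or ψ) → IQC (φ :: Γ) χ → IQC (ψ :: Γ) χ → IQC Γ χ
  | impI {Γ : List PFml} {φ ψ : PFml} : IQC (φ :: Γ) ψ → IQC Γ (φ.imp ψ)
  | impE {Γ : List PFml} {φ ψ : PFml} : IQC Γ (φ.imp ψ) → IQC Γ φ → IQC Γ ψ
  | allI {Γ x φ} : IQC Γ φ → (∀ ψ ∈ Γ, x ∉ ψ.fv) → IQC Γ (.all x φ)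
  | allE {Γ x φ} (t : PTerm) : IQC Γ (.all x φ) → φ.FreeForM (sub1 x t) →
      IQC Γ (φ.msub (sub1 x t))
  | exI {Γ x φ} (t : PTerm) : IQC Γ (φ.msub (sub1 x t)) → φ.FreeForM (sub1 x t) →
      IQC Γ (.ex x φ)
  | exE {Γ x φ χ} : IQC Γ (.ex x φ) → IQC (φ :: Γ) χ → x ∉ χ.fv →
      (∀ ψ ∈ Γ, x ∉ ψ.fv) → IQC Γ χ

/-- `Pⁿᵢ` occurs in the formula. -/
def PFml.occursP (n i : ℕ) : PFml → Prop
  | .atom j args => j = i ∧ args.length = n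
  | .and φ ψ => φ.occursP n i ∨ ψ.occursP n i
  | .or φ ψ => φ.occursP n i ∨ ψ.occursP n i
  | .imp φ ψ => φ.occursP n i ∨ ψ.occursP n i
  | .all _ φ => φ.occursP n i
  | .ex _ φ => φ.occursP n i
  | _ => False



/-- Substitution of formulas for predicate variables. -/
def PFml.substP (σ : ℕ → ℕ → PFml) : PFml → PFml
  | .atom i args => (σ args.length i).msub (argSub args)
  | .and φ ψ => (φ.substP σ).and (ψ.substP σ)
  | .or φ ψ => (φ.substP σ).or (ψ.substP σ)
  | .imp φ ψ => (φ.substP σ).imp (ψ.substP σ)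
  | .all x φ => .all x (φ.substP σ)
  | .ex x φ => .ex x (φ.substP σ)
  | .bot => .bot

def PFml.AcceptableP (σ : ℕ → ℕ → PFml) : PFml → Prop
  | .atom i args => (σ args.length i).FreeForM (argSub args)
  | .and φ ψ => φ.AcceptableP σ ∧ ψ.AcceptableP σ
  | .or φ ψ => φ.AcceptableP σ ∧ ψ.AcceptableP σ
  | .imp φ ψ => φ.AcceptableP σ ∧ ψ.AcceptableP σ
  | .all x φ => (∀ n i, φ.occursP n i → x ∉ (σ n i).fv \ Finset.range n) ∧ φ.AcceptableP σ
  | .ex x φ => (∀ n i, φ.occursP n i → x ∉ (σ n i).fv \ Finset.range n) ∧ φ.AcceptableP σ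
  | .bot => True

/-- `φ` is a substitutional instance of the predicate formula `base`. -/
def IsInstance (base φ : PFml) : Prop :=
  ∃ σ : ℕ → ℕ → PFml, base.AcceptableP σ ∧ φ = base.substP σ



inductive LATerm : Type
  | var (v : ℕ)
  | zero
  | succ (t : LATerm)
  | add (t u : LATerm)
  | mul (t u : LATerm)

def LATerm.eval (ρ : ℕ → ℕ) : LATerm → ℕ
  | var v => ρ v
  | zero => 0
  | succ t => t.eval ρ + 1
  | add t u => t.eval ρ + u.eval ρ
  | mul t u => t.eval ρ * u.eval ρ

def LATerm.fv : LATerm → Finset ℕ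
  | var v => {v}
  | zero => ∅
  | succ t => t.fv
  | add t u => t.fv ∪ u.fv
  | mul t u => t.fv ∪ u.fv

def LATerm.msub (s : ℕ → LATerm) : LATerm → LATerm
  | var v => s v
  | zero => zero
  | succ t => succ (t.msub s)
  | add t u => add (t.msub s) (u.msub s)
  | mul t u => mul (t.msub s) (u.msub s)

/-- The numeral for `n`. -/
def numeral : ℕ → LATerm
  | 0 => .zero
  | n + 1 => .succ (numeral n)

inductive LAFml : Type
  | eq (t u : LATerm)
  | and (φ ψ : LAFml)
  | or (φ ψ : LAFml)
  | imp (φ ψ : LAFml)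
  | not (φ : LAFml)
  | all (x : ℕ) (φ : LAFml)
  | ex (x : ℕ) (φ : LAFml)

def LAFml.fv : LAFml → Finset ℕ
  | eq t u => t.fv ∪ u.fv
  | and φ ψ => φ.fv ∪ ψ.fv
  | or φ ψ => φ.fv ∪ ψ.fv
  | imp φ ψ => φ.fv ∪ ψ.fv
  | not φ => φ.fv
  | all x φ => φ.fv.erase x
  | ex x φ => φ.fv.erase x

def LAFml.msub (s : ℕ → LATerm) : LAFml → LAFml
  | eq t u => eq (t.msub s) (u.msub s)
  | and φ ψ => (φ.msub s).and (ψ.msub s)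
  | or φ ψ => (φ.msub s).or (ψ.msub s)
  | imp φ ψ => (φ.msub s).imp (ψ.msub s)
  | not φ => (φ.msub s).not
  | all x φ => all x (φ.msub fun v => if v = x then .var x else s v)
  | ex x φ => ex x (φ.msub fun v => if v = x then .var x else s v)

def sub1LA (x : ℕ) (t : LATerm) : ℕ → LATerm := fun v => if v = x then t else .var v

def LAFml.FreeForM (s : ℕ → LATerm) : LAFml → Prop
  | and φ ψ => φ.FreeForM s ∧ ψ.FreeForM s
  | or φ ψ => φ.FreeForM s ∧ ψ.FreeForM s
  | imp φ ψ => φ.FreeForM s ∧ ψ.FreeForM s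
  | not φ => φ.FreeForM s
  | all x φ => (∀ v ∈ φ.fv, v ≠ x → x ∉ (s v).fv) ∧
      φ.FreeForM (fun v => if v = x then .var x else s v)
  | ex x φ => (∀ v ∈ φ.fv, v ≠ x → x ∉ (s v).fv) ∧
      φ.FreeForM (fun v => if v = x then .var x else s v)
  | _ => True

/-- Classical truth of an `LA`-formula in the standard model. -/
def LATrue : (ℕ → ℕ) → LAFml → Prop
  | ρ, .eq t u => t.eval ρ = u.eval ρ
  | ρ, .and φ ψ => LATrue ρ φ ∧ LATrue ρ ψ
  | ρ, .or φ ψ => LATrue ρ φ ∨ LATrue ρ ψ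
  | ρ, .imp φ ψ => LATrue ρ φ → LATrue ρ ψ
  | ρ, .not φ => ¬ LATrue ρ φ
  | ρ, .all x φ => ∀ a, LATrue (Function.update ρ x a) φ
  | ρ, .ex x φ => ∃ a, LATrue (Function.update ρ x a) φ


/-- Kleene's recursive realizability for `LA`-formulas. -/
def LAReal : (ℕ → ℕ) → ℕ → LAFml → Prop
  | ρ, e, .eq t u => e = 0 ∧ t.eval ρ = u.eval ρ
  | ρ, e, .and φ ψ => LAReal ρ (pexp 0 e) φ ∧ LAReal ρ (pexp 1 e) ψ
  | ρ, e, .or φ ψ => (pexp 0 e = 0 ∧ LAReal ρ (pexp 1 e) φ) ∨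
      (pexp 0 e = 1 ∧ LAReal ρ (pexp 1 e) ψ)
  | ρ, e, .imp φ ψ => ∀ a, LAReal ρ a φ → ∃ b ∈ K e a, LAReal ρ b ψ
  | ρ, _, .not φ => ∀ a, ¬ LAReal ρ a φ
  | ρ, e, .all x φ => ∀ a, ∃ b ∈ K e a, LAReal (Function.update ρ x a) b φ
  | ρ, e, .ex x φ => LAReal (Function.update ρ x (pexp 0 e)) (pexp 1 e) φ

/-- `t₁ ≤ t₂` in `LA`: `∃v (t₁ + v = t₂)`. -/
def leLA (x v : ℕ) (t : LATerm) : LAFml := .ex v (.eq (.add (.var x) (.var v)) t)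

inductive IsDelta0LA : LAFml → Prop
  | eq (t u) : IsDelta0LA (.eq t u)
  | and {φ ψ} : IsDelta0LA φ → IsDelta0LA ψ → IsDelta0LA (φ.and ψ)
  | or {φ ψ} : IsDelta0LA φ → IsDelta0LA ψ → IsDelta0LA (φ.or ψ)
  | imp {φ ψ} : IsDelta0LA φ → IsDelta0LA ψ → IsDelta0LA (φ.imp ψ)
  | not {φ} : IsDelta0LA φ → IsDelta0LA φ.not
  | ball {x v : ℕ} {t : LATerm} {φ} : x ∉ t.fv → v ∉ t.fv → v ≠ x → IsDelta0LA φ →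
      IsDelta0LA (.all x ((leLA x v t).imp φ))
  | bex {x v : ℕ} {t : LATerm} {φ} : x ∉ t.fv → v ∉ t.fv → v ≠ x → IsDelta0LA φ →
      IsDelta0LA (.ex x ((leLA x v t).and φ))

inductive IsSigmaLA : LAFml → Prop
  | delta0 {φ} : IsDelta0LA φ → IsSigmaLA φ
  | and {φ ψ} : IsSigmaLA φ → IsSigmaLA ψ → IsSigmaLA (φ.and ψ)
  | or {φ ψ} : IsSigmaLA φ → IsSigmaLA ψ → IsSigmaLA (φ.or ψ)
  | ball {x v : ℕ} {t : LATerm} {φ} : x ∉ t.fv → v ∉ t.fv → v ≠ x → IsSigmaLA φ →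
      IsSigmaLA (.all x ((leLA x v t).imp φ))
  | bex {x v : ℕ} {t : LATerm} {φ} : x ∉ t.fv → v ∉ t.fv → v ≠ x → IsSigmaLA φ →
      IsSigmaLA (.ex x ((leLA x v t).and φ))
  | ex {x : ℕ} {φ} : IsSigmaLA φ → IsSigmaLA (.ex x φ)

/-- Natural deduction over `LA` from a set `Ax` of non-logical axioms
(intuitionistic logic). -/
inductive LD (Ax : LAFml → Prop) : List LAFml → LAFml → Prop
  | ax {Γ φ} : Ax φ → LD Ax Γ φ
  | hyp {Γ φ} : φ ∈ Γ → LD Ax Γ φ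
  | andI {Γ : List LAFml} {φ ψ : LAFml} : LD Ax Γ φ → LD Ax Γ ψ → LD Ax Γ (φ.and ψ)
  | andE1 {Γ : List LAFml} {φ ψ : LAFml} : LD Ax Γ (φ.and ψ) → LD Ax Γ φ
  | andE2 {Γ : List LAFml} {φ ψ : LAFml} : LD Ax Γ (φ.and ψ) → LD Ax Γ ψ
  | orI1 {Γ : List LAFml} {φ ψ : LAFml} : LD Ax Γ φ → LD Ax Γ (φ.or ψ)
  | orI2 {Γ : List LAFml} {φ ψ : LAFml} : LD Ax Γ ψ → LD Ax Γ (φ.or ψ)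
  | orE {Γ φ ψ χ} : LD Ax Γ (φ.or ψ) → LD Ax (φ :: Γ) χ → LD Ax (ψ :: Γ) χ → LD Ax Γ χ
  | impI {Γ : List LAFml} {φ ψ : LAFml} : LD Ax (φ :: Γ) ψ → LD Ax Γ (φ.imp ψ)
  | impE {Γ : List LAFml} {φ ψ : LAFml} : LD Ax Γ (φ.imp ψ) → LD Ax Γ φ → LD Ax Γ ψ
  | notI {Γ : List LAFml} {φ ψ : LAFml} : LD Ax (φ :: Γ) ψ → LD Ax (φ :: Γ) ψ.not → LD Ax Γ φ.not
  | notE {Γ : List LAFml} {φ ψ : LAFml} : LD Ax Γ φ → LD Ax Γ φ.not → LD Ax Γ ψ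
  | allI {Γ x φ} : LD Ax Γ φ → (∀ ψ ∈ Γ, x ∉ ψ.fv) → LD Ax Γ (.all x φ)
  | allE {Γ x φ} (t : LATerm) : LD Ax Γ (.all x φ) → φ.FreeForM (sub1LA x t) →
      LD Ax Γ (φ.msub (sub1LA x t))
  | exI {Γ x φ} (t : LATerm) : LD Ax Γ (φ.msub (sub1LA x t)) → φ.FreeForM (sub1LA x t) →
      LD Ax Γ (.ex x φ)
  | exE {Γ x φ χ} : LD Ax Γ (.ex x φ) → LD Ax (φ :: Γ) χ → x ∉ χ.fv →
      (∀ ψ ∈ Γ, x ∉ ψ.fv) → LD Ax Γ χ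

open LATerm (var) in
/-- The axioms of equality and the Peano axioms for successor, sum and product
(without induction). -/
def baseAxioms : List LAFml := [
  .all 0 (.eq (var 0) (var 0)),
  .all 0 (.all 1 (.all 2 ((LAFml.eq (var 0) (var 1)).imp
    ((LAFml.eq (var 0) (var 2)).imp (.eq (var 1) (var 2)))))),
  .all 0 (.all 1 ((LAFml.eq (var 0) (var 1)).imp (.eq (.succ (var 0)) (.succ (var 1))))),
  .all 0 (.all 1 ((LAFml.eq (.succ (var 0)) (.succ (var 1))).imp (.eq (var 0) (var 1)))),
  .all 0 (LAFml.not (.eq (.succ (var 0)) .zero)),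
  .all 0 (.all 1 (.all 2 ((LAFml.eq (var 0) (var 1)).imp
    (.eq (.add (var 0) (var 2)) (.add (var 1) (var 2)))))),
  .all 0 (.all 1 (.all 2 ((LAFml.eq (var 0) (var 1)).imp
    (.eq (.add (var 2) (var 0)) (.add (var 2) (var 1)))))),
  .all 0 (.all 1 (.all 2 ((LAFml.eq (var 0) (var 1)).imp
    (.eq (.mul (var 0) (var 2)) (.mul (var 1) (var 2)))))),
  .all 0 (.all 1 (.all 2 ((LAFml.eq (var 0) (var 1)).imp
    (.eq (.mul (var 2) (var 0)) (.mul (var 2) (var 1)))))),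
  .all 0 (.eq (.add (var 0) .zero) (var 0)),
  .all 0 (.all 1 (.eq (.add (var 0) (.succ (var 1))) (.succ (.add (var 0) (var 1))))),
  .all 0 (.eq (.mul (var 0) .zero) .zero),
  .all 0 (.all 1 (.eq (.mul (var 0) (.succ (var 1)))
    (.add (.mul (var 0) (var 1)) (var 0))))]

/-- The axioms of intuitionistic Robinson arithmetic `IRA`: the Peano axioms with the
induction scheme replaced by `∀x (x = 0 ∨ ∃y (x = sy))`. -/
def IRAax (φ : LAFml) : Prop :=
  φ ∈ baseAxioms ∨
    φ = .all 0 ((LAFml.eq (.var 0) .zero).or (.ex 1 (.eq (.var 0) (.succ (.var 1)))))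

/-- An instance of the induction scheme. -/
def indInst (x : ℕ) (φ : LAFml) : LAFml :=
  ((φ.msub (sub1LA x .zero)).and
    (.all x (φ.imp (φ.msub (sub1LA x (.succ (.var x))))))).imp (.all x φ)

/-- The axioms of Heyting arithmetic `HA`. -/
def HAax (ψ : LAFml) : Prop := ψ ∈ baseAxioms ∨ ∃ x φ, ψ = indInst x φ




/-- Translation of schemes into pure predicate formulas: the arithmetical predicate
symbols `Z,E,S,A,M` become the predicate variables `P¹₀,P²₀,P²₁,P³₀,P³₁`, and the other
predicate variables are renamed injectively so as to avoid these five. -/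
def Scheme.toPFml : Scheme → PFml
  | .bot => .bot
  | .sZ t => vZ t
  | .sE t u => vE t u
  | .sS t u => vS t u
  | .sA t u w => vA t u w
  | .sM t u w => vM t u w
  | .patom i args => .atom (i + 2) args
  | .and φ ψ => φ.toPFml.and ψ.toPFml
  | .or φ ψ => φ.toPFml.or ψ.toPFml
  | .imp φ ψ => φ.toPFml.imp ψ.toPFml
  | .all x φ => .all x φ.toPFml
  | .ex x φ => .ex x φ.toPFml

/-- `Eq(E,P₁,…,Pₘ)`: the conjunction of the axioms of equality for the predicate
variables of the scheme `Φ` (as renamed by `Scheme.toPFml`). -/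
noncomputable def EqFor (Φ : Scheme) : PFml :=
  bigAnd (Φ.pvars.toList.map fun p => eqAx p.1 (p.2 + 2))

/-- `Φ*`: the pure predicate formula
`Q(Z,E,S,A,M) & Eq(E,P₁,…,Pₘ) → Φ(Z,E,S,A,M,P₁,…,Pₘ)` associated with a scheme `Φ`. -/
noncomputable def SchemeStar (G B : PFml) (Φ : Scheme) : PFml :=
  ((Qfml G B).and (EqFor Φ)).imp Φ.toPFml

/-- The Markov principle `M` as a pure predicate formula, with `P` the unary
predicate variable `P¹₁`. -/
def Mfml : PFml :=
  ((PFml.all 0 ((PFml.atom 1 [.var 0]).or (PFml.atom 1 [.var 0]).not)).and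
    (PFml.ex 0 (PFml.atom 1 [.var 0])).not.not).imp (PFml.ex 0 (PFml.atom 1 [.var 0]))

/-- `G(z,x,y)` where `z,x,y` are the variables `2,0,1` and the distinguished variables
`0,1,2` of `G` play the role of `x,y,z` in `G(x,y,z)` (expressing `{x}(y)=z`). -/
def Gzxy (G : PFml) : PFml :=
  G.msub fun v => if v = 0 then .var 2 else if v = 1 then .var 0 else
    if v = 2 then .var 1 else .var v

/-- The scheme `nCT` as a pure predicate formula: `P` is the predicate variable `P¹₁`
and `Q'` is `P²₂`. -/
def nCTfml (G : PFml) : PFml :=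
  (PFml.all 0 ((PFml.atom 1 [.var 0]).not.imp
      (PFml.ex 1 (PFml.atom 2 [.var 0, .var 1])))).imp
    (PFml.ex 2 (PFml.all 0 ((PFml.atom 1 [.var 0]).not.imp
      (PFml.ex 1 ((Gzxy G).and (PFml.atom 2 [.var 0, .var 1]))))))

/-- The pure predicate formula `nCT*`, i.e. `Q & Eq(E,P,Q') → nCT`. -/
def nCTstar (G B : PFml) : PFml :=
  ((Qfml G B).and ((eqAx 1 1).and (eqAx 2 2))).imp (nCTfml G)

/-- The calculus `MQC`: intuitionistic predicate calculus together with all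
substitutional instances of the Markov principle `M` and of the formula `nCT*`
as axioms. -/
inductive MQC (G B : PFml) : List PFml → PFml → Prop
  | axM {Γ : List PFml} {φ : PFml} : IsInstance Mfml φ → MQC G B Γ φ
  | axCT {Γ : List PFml} {φ : PFml} : IsInstance (nCTstar G B) φ → MQC G B Γ φ
  | hyp {Γ : List PFml} {φ : PFml} : φ ∈ Γ → MQC G B Γ φ
  | botE {Γ φ} : MQC G B Γ .bot → MQC G B Γ φ
  | andI {Γ : List PFml} {φ ψ : PFml} : MQC G B Γ φ → MQC G B Γ ψ → MQC G B Γ (φ.and ψ)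
  | andE1 {Γ : List PFml} {φ ψ : PFml} : MQC G B Γ (φ.and ψ) → MQC G B Γ φ
  | andE2 {Γ : List PFml} {φ ψ : PFml} : MQC G B Γ (φ.and ψ) → MQC G B Γ ψ
  | orI1 {Γ : List PFml} {φ ψ : PFml} : MQC G B Γ φ → MQC G B Γ (φ.or ψ)
  | orI2 {Γ : List PFml} {φ ψ : PFml} : MQC G B Γ ψ → MQC G B Γ (φ.or ψ)
  | orE {Γ : List PFml} {φ ψ χ : PFml} : MQC G B Γ (φ.or ψ) → MQC G B (φ :: Γ) χ →
      MQC G B (ψ :: Γ) χ → MQC G B Γ χ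
  | impI {Γ : List PFml} {φ ψ : PFml} : MQC G B (φ :: Γ) ψ → MQC G B Γ (φ.imp ψ)
  | impE {Γ : List PFml} {φ ψ : PFml} : MQC G B Γ (φ.imp ψ) → MQC G B Γ φ → MQC G B Γ ψ
  | allI {Γ x φ} : MQC G B Γ φ → (∀ ψ ∈ Γ, x ∉ ψ.fv) → MQC G B Γ (.all x φ)
  | allE {Γ x φ} (t : PTerm) : MQC G B Γ (.all x φ) → φ.FreeForM (sub1 x t) →
      MQC G B Γ (φ.msub (sub1 x t))
  | exI {Γ x φ} (t : PTerm) : MQC G B Γ (φ.msub (sub1 x t)) → φ.FreeForM (sub1 x t) →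
      MQC G B Γ (.ex x φ)
  | exE {Γ x φ χ} : MQC G B Γ (.ex x φ) → MQC G B (φ :: Γ) χ → x ∉ χ.fv →
      (∀ ψ ∈ Γ, x ∉ ψ.fv) → MQC G B Γ χ

/-- The classical predicate calculus `CQC`: intuitionistic predicate calculus together
with the law of the excluded middle. -/
inductive CQC : List PFml → PFml → Prop
  | em {Γ : List PFml} (φ : PFml) : CQC Γ (φ.or φ.not)
  | hyp {Γ : List PFml} {φ : PFml} : φ ∈ Γ → CQC Γ φ
  | botE {Γ φ} : CQC Γ .bot → CQC Γ φ
  | andI {Γ : List PFml} {φ ψ : PFml} : CQC Γ φ → CQC Γ ψ → CQC Γ (φ.and ψ)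
  | andE1 {Γ : List PFml} {φ ψ : PFml} : CQC Γ (φ.and ψ) → CQC Γ φ
  | andE2 {Γ : List PFml} {φ ψ : PFml} : CQC Γ (φ.and ψ) → CQC Γ ψ
  | orI1 {Γ : List PFml} {φ ψ : PFml} : CQC Γ φ → CQC Γ (φ.or ψ)
  | orI2 {Γ : List PFml} {φ ψ : PFml} : CQC Γ ψ → CQC Γ (φ.or ψ)
  | orE {Γ : List PFml} {φ ψ χ : PFml} : CQC Γ (φ.or ψ) → CQC (φ :: Γ) χ →
      CQC (ψ :: Γ) χ → CQC Γ χ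
  | impI {Γ : List PFml} {φ ψ : PFml} : CQC (φ :: Γ) ψ → CQC Γ (φ.imp ψ)
  | impE {Γ : List PFml} {φ ψ : PFml} : CQC Γ (φ.imp ψ) → CQC Γ φ → CQC Γ ψ
  | allI {Γ x φ} : CQC Γ φ → (∀ ψ ∈ Γ, x ∉ ψ.fv) → CQC Γ (.all x φ)
  | allE {Γ x φ} (t : PTerm) : CQC Γ (.all x φ) → φ.FreeForM (sub1 x t) →
      CQC Γ (φ.msub (sub1 x t))
  | exI {Γ x φ} (t : PTerm) : CQC Γ (φ.msub (sub1 x t)) → φ.FreeForM (sub1 x t) →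
      CQC Γ (.ex x φ)
  | exE {Γ x φ χ} : CQC Γ (.ex x φ) → CQC (φ :: Γ) χ → x ∉ χ.fv →
      (∀ ψ ∈ Γ, x ∉ ψ.fv) → CQC Γ χ

/-- Auxiliary translation for the predicate form: the formula expressing that the
`LA`-term `t` has value `v`; `k` is a supply of fresh variables, and the next unused
fresh variable is returned. -/
def LATerm.pf : LATerm → ℕ → ℕ → PFml × ℕ
  | .var u, v, k => (vE (.var u) (.var v), k)
  | .zero, v, k => (vZ (.var v), k)
  | .succ t, v, k =>
      let r := t.pf k (k + 1)
      (.ex k (r.1.and (vS (.var k) (.var v))), r.2)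
  | .add t u, v, k =>
      let r1 := t.pf k (k + 2)
      let r2 := u.pf (k + 1) r1.2
      (.ex k (.ex (k + 1) (r1.1.and (r2.1.and (vA (.var k) (.var (k + 1)) (.var v))))), r2.2)
  | .mul t u, v, k =>
      let r1 := t.pf k (k + 2)
      let r2 := u.pf (k + 1) r1.2
      (.ex k (.ex (k + 1) (r1.1.and (r2.1.and (vM (.var k) (.var (k + 1)) (.var v))))), r2.2)

/-- Auxiliary translation for the predicate form of an `LA`-formula;
`k` is a supply of fresh variables. -/
def LAFml.pf : LAFml → ℕ → PFml
  | .eq t u, k =>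
      let r1 := t.pf k (k + 2)
      let r2 := u.pf (k + 1) r1.2
      .ex k (.ex (k + 1) (r1.1.and (r2.1.and (vE (.var k) (.var (k + 1))))))
  | .and φ ψ, k => (φ.pf k).and (ψ.pf k)
  | .or φ ψ, k => (φ.pf k).or (ψ.pf k)
  | .imp φ ψ, k => (φ.pf k).imp (ψ.pf k)
  | .not φ, k => (φ.pf k).not
  | .all x φ, k => .all x (φ.pf k)
  | .ex x φ, k => .ex x (φ.pf k)

def LATerm.vmax : LATerm → ℕ
  | .var v => v + 1
  | .zero => 0
  | .succ t => t.vmax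
  | .add t u => max t.vmax u.vmax
  | .mul t u => max t.vmax u.vmax

def LAFml.vmax : LAFml → ℕ
  | .eq t u => max t.vmax u.vmax
  | .and φ ψ => max φ.vmax ψ.vmax
  | .or φ ψ => max φ.vmax ψ.vmax
  | .imp φ ψ => max φ.vmax ψ.vmax
  | .not φ => φ.vmax
  | .all x φ => max (x + 1) φ.vmax
  | .ex x φ => max (x + 1) φ.vmax

/-- The predicate form of an `LA`-formula: the result of eliminating the function
symbols `0, s, +, ·` and replacing `=` by the predicate symbol `E`. -/
def predForm (φ : LAFml) : PFml := φ.pf φ.vmax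

/-- Translation of `L*`-terms into `LA`-terms (constants become numerals). -/
def PTerm.toLA : PTerm → LATerm
  | .var v => .var v
  | .const c => numeral c

/-- Substitution of arithmetical formulas for the predicate variables of a predicate
formula: the atom `Pⁿᵢ(t₁,…,tₙ)` is replaced by the result of substituting `t₁,…,tₙ`
for the distinguished variables `0,…,n-1` of the `LA`-formula `σ n i`. -/
def PFml.toLA (σ : ℕ → ℕ → LAFml) : PFml → LAFml
  | .bot => .eq .zero (.succ .zero)
  | .atom i args => (σ args.length i).msub
      (fun v => if h : v < args.length then (args.get ⟨v, h⟩).toLA else .var v)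
  | .and φ ψ => (φ.toLA σ).and (ψ.toLA σ)
  | .or φ ψ => (φ.toLA σ).or (ψ.toLA σ)
  | .imp φ ψ => (φ.toLA σ).imp (ψ.toLA σ)
  | .all x φ => .all x (φ.toLA σ)
  | .ex x φ => .ex x (φ.toLA σ)

/-- Acceptability of the arithmetical substitution `σ` for a predicate formula. -/
def PFml.AcceptLA (σ : ℕ → ℕ → LAFml) : PFml → Prop
  | .atom i args => (σ args.length i).FreeForM
      (fun v => if h : v < args.length then (args.get ⟨v, h⟩).toLA else .var v)
  | .and φ ψ => φ.AcceptLA σ ∧ ψ.AcceptLA σ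
  | .or φ ψ => φ.AcceptLA σ ∧ ψ.AcceptLA σ
  | .imp φ ψ => φ.AcceptLA σ ∧ ψ.AcceptLA σ
  | .all x φ => (∀ n i, φ.occursP n i → x ∉ (σ n i).fv \ Finset.range n) ∧ φ.AcceptLA σ
  | .ex x φ => (∀ n i, φ.occursP n i → x ∉ (σ n i).fv \ Finset.range n) ∧ φ.AcceptLA σ
  | .bot => True

/-- The standard arithmetical reading of the predicate symbols `Z,E,S,A,M`. -/
def arithSig : ℕ → ℕ → LAFml
  | 1, 0 => .eq (.var 0) .zero
  | 2, 0 => .eq (.var 0) (.var 1)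
  | 2, 1 => .eq (.succ (.var 0)) (.var 1)
  | 3, 0 => .eq (.add (.var 0) (.var 1)) (.var 2)
  | 3, 1 => .eq (.mul (.var 0) (.var 1)) (.var 2)
  | _, _ => .eq .zero (.succ .zero)

/-- An instance of the Markov scheme `M` in the language `LA`. -/
def MinstLA (x : ℕ) (φ : LAFml) : LAFml :=
  ((LAFml.all x (φ.or φ.not)).and (LAFml.ex x φ).not.not).imp (.ex x φ)

/-- An instance of the scheme `nCT` in the language `LA` (with `x,y,e` the variables
`0,1,2`): `∀x(¬Ψ(x) → ∃y Φ(x,y)) → ∃e ∀x(¬Ψ(x) → ∃y(G(e,x,y) & Φ(x,y)))`. -/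
def nCTinstLA (GLA Ψ Φ : LAFml) : LAFml :=
  (LAFml.all 0 (Ψ.not.imp (.ex 1 Φ))).imp
    (.ex 2 (.all 0 (Ψ.not.imp (.ex 1 ((GLA.msub fun v =>
      if v = 0 then .var 2 else if v = 1 then .var 0 else
        if v = 2 then .var 1 else .var v).and Φ)))))

/-- The axioms of Markov arithmetic `MA = HA + M + nCT`. -/
def MAax (GLA : LAFml) (ψ : LAFml) : Prop :=
  HAax ψ ∨ (∃ x φ, ψ = MinstLA x φ) ∨
    (∃ Ψ Φ : LAFml, 1 ∉ Ψ.fv ∧ 2 ∉ Ψ.fv ∧ 2 ∉ Φ.fv ∧ ψ = nCTinstLA GLA Ψ Φ)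

/-- The axioms of the theory `CA`: the Peano axioms (those of `HA`) together with all
arithmetical substitutional instances of the predicate formulas `M` and `nCT*`. -/
def CAax (G B : PFml) (ψ : LAFml) : Prop :=
  HAax ψ ∨ (∃ σ, Mfml.AcceptLA σ ∧ ψ = Mfml.toLA σ) ∨
    (∃ σ, (nCTstar G B).AcceptLA σ ∧ ψ = (nCTstar G B).toLA σ)


/-- The interpretation `f` is a model of the closed formula `Φ` if `Φ` is
`f`-realizable. -/
def IsModel (f : Interp) (φ : PFml) : Prop := ∃ e, Realizes f rho0 e φ

/-- A natural number `a` is `f`-standard if the formula `[n](a)` is `f`-realizable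
for some `n`. -/
def fStandard (f : Interp) (a : ℕ) : Prop :=
  ∃ n e, Realizes f rho0 e (numFt n (.const a))

/-- The scheme `nCT` (with `P` the unary predicate variable `P¹₀` and `Q'` the binary
predicate variable `P²₀`, and `x,y,z` the variables `0,1,2`):
`∀x(¬P(x) → ∃y Q'(x,y)) → ∃z ∀x (¬P(x) → ∃y (G(z,x,y) & Q'(x,y)))`. -/
def nCTscheme (GS : Scheme) : Scheme :=
  (Scheme.all 0 ((Scheme.patom 0 [.var 0]).not.imp
      (.ex 1 (.patom 0 [.var 0, .var 1])))).imp
    (.ex 2 (.all 0 ((Scheme.patom 0 [.var 0]).not.imp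
      (.ex 1 ((GS.msub fun v => if v = 0 then .var 2 else if v = 1 then .var 0 else
          if v = 2 then .var 1 else .var v).and (.patom 0 [.var 0, .var 1]))))))

/-- The arithmetical formula `Φ(x) = ∃y (Z(y) & G(x,x,y))` (with `x,y` the
variables `0,1`), expressing `{x}(x) = 0`. -/
def PhiX (G : PFml) : PFml :=
  .ex 1 ((vZ (.var 1)).and (G.msub fun v =>
    if v = 0 then .var 0 else if v = 1 then .var 0 else
      if v = 2 then .var 1 else .var v))

/-- The predicate formula `Ψ* = (Q → Ψ)` where `Ψ = ¬∀x(¬Φ(x) ∨ Φ(x))` and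
`Φ(x) = ∃y(Z(y) & G(x,x,y))`. -/
def PsiStar (G B : PFml) : PFml :=
  (Qfml G B).imp (PFml.not (.all 0 (((PhiX G).not).or (PhiX G))))

end Cpc

namespace Cpc

theorem eval_congr (t : PTerm) (ρ ρ' : ℕ → ℕ) (h : ∀ v ∈ t.fv, ρ v = ρ' v) :
    t.eval ρ = t.eval ρ' := by
  cases t with
  | var v => exact h v (by simp [PTerm.fv])
  | const c => rfl

theorem eval_msub (t : PTerm) (s : ℕ → PTerm) (ρ : ℕ → ℕ) :
    (t.msub s).eval ρ = t.eval (fun v => (s v).eval ρ) := by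
  cases t <;> rfl

theorem mem_args_fv (args : List PTerm) (t : PTerm) (ht : t ∈ args) (v : ℕ) (hv : v ∈ t.fv) :
    v ∈ args.foldr (fun t s => t.fv ∪ s) (∅ : Finset ℕ) := by
  induction args with
  | nil => simp at ht
  | cons a l ih =>
    simp only [List.foldr_cons, Finset.mem_union]
    rcases List.mem_cons.1 ht with rfl | h
    · exact Or.inl hv
    · exact Or.inr (ih h)

/-- Realizability depends only on the values of the free variables. -/
theorem sreal_congr (f : Interp) (φ : Scheme) : ∀ (ρ ρ' : ℕ → ℕ) (e : ℕ),
    (∀ v ∈ φ.fv, ρ v = ρ' v) → (SReal f ρ e φ ↔ SReal f ρ' e φ) := by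
  have upd : ∀ (φ : Scheme) (x a : ℕ) (ρ ρ' : ℕ → ℕ), (∀ v ∈ φ.fv.erase x, ρ v = ρ' v) →
      ∀ v ∈ φ.fv, Function.update ρ x a v = Function.update ρ' x a v := by
    intro φ x a ρ ρ' h v hv
    by_cases hx : v = x
    · subst hx; simp
    · simp [Function.update_of_ne hx, h v (Finset.mem_erase.2 ⟨hx, hv⟩)]
  induction φ with
  | bot => intros; rfl
  | sZ t =>
    intro ρ ρ' e h
    simp only [SReal, eval_congr t ρ ρ' h]
  | sE t u =>
    intro ρ ρ' e h
    simp only [Scheme.fv, Finset.mem_union] at h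
    simp only [SReal, eval_congr t ρ ρ' (fun v hv => h v (by tauto)),
      eval_congr u ρ ρ' (fun v hv => h v (by tauto))]
  | sS t u =>
    intro ρ ρ' e h
    simp only [Scheme.fv, Finset.mem_union] at h
    simp only [SReal, eval_congr t ρ ρ' (fun v hv => h v (by tauto)),
      eval_congr u ρ ρ' (fun v hv => h v (by tauto))]
  | sA t u w =>
    intro ρ ρ' e h
    simp only [Scheme.fv, Finset.mem_union] at h
    simp only [SReal, eval_congr t ρ ρ' (fun v hv => h v (by tauto)),
      eval_congr u ρ ρ' (fun v hv => h v (by tauto)),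
      eval_congr w ρ ρ' (fun v hv => h v (by tauto))]
  | sM t u w =>
    intro ρ ρ' e h
    simp only [Scheme.fv, Finset.mem_union] at h
    simp only [SReal, eval_congr t ρ ρ' (fun v hv => h v (by tauto)),
      eval_congr u ρ ρ' (fun v hv => h v (by tauto)),
      eval_congr w ρ ρ' (fun v hv => h v (by tauto))]
  | patom i args =>
    intro ρ ρ' e h
    simp only [SReal]
    have : (fun j => (args.get j).eval ρ) = (fun j => (args.get j).eval ρ') := by
      funext j
      exact eval_congr _ _ _ (fun v hv => h v (mem_args_fv args _ (List.get_mem args j) v hv))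
    rw [this]
  | and φ ψ ih1 ih2 =>
    intro ρ ρ' e h
    simp only [Scheme.fv, Finset.mem_union] at h
    simp only [SReal, ih1 ρ ρ' _ (fun v hv => h v (Or.inl hv)),
      ih2 ρ ρ' _ (fun v hv => h v (Or.inr hv))]
  | or φ ψ ih1 ih2 =>
    intro ρ ρ' e h
    simp only [Scheme.fv, Finset.mem_union] at h
    simp only [SReal, ih1 ρ ρ' _ (fun v hv => h v (Or.inl hv)),
      ih2 ρ ρ' _ (fun v hv => h v (Or.inr hv))]
  | imp φ ψ ih1 ih2 =>
    intro ρ ρ' e h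
    simp only [Scheme.fv, Finset.mem_union] at h
    simp only [SReal, ih1 ρ ρ' _ (fun v hv => h v (Or.inl hv)),
      ih2 ρ ρ' _ (fun v hv => h v (Or.inr hv))]
  | all x φ ih =>
    intro ρ ρ' e h
    simp only [SReal]
    exact forall_congr' fun a => exists_congr fun b => and_congr_right fun _ =>
      ih _ _ b (upd φ x a ρ ρ' h)
  | ex x φ ih =>
    intro ρ ρ' e h
    simp only [SReal]
    exact ih _ _ _ (upd φ x _ ρ ρ' h)

/-- The substitution lemma for terms. -/
theorem sreal_msub (f : Interp) (φ : Scheme) : ∀ (s : ℕ → PTerm) (ρ : ℕ → ℕ) (e : ℕ),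
    φ.FreeForM s → (SReal f ρ e (φ.msub s) ↔ SReal f (fun v => (s v).eval ρ) e φ) := by
  have upd : ∀ (φ : Scheme) (s : ℕ → PTerm) (x a : ℕ) (ρ : ℕ → ℕ),
      (∀ v ∈ φ.fv, v ≠ x → x ∉ (s v).fv) → ∀ v ∈ φ.fv,
      (if v = x then PTerm.var x else s v).eval (Function.update ρ x a) =
        Function.update (fun v => (s v).eval ρ) x a v := by
    intro φ s x a ρ h v hv
    by_cases hx : v = x
    · subst hx; simp [PTerm.eval]
    · simp only [if_neg hx, Function.update_of_ne hx]
      refine eval_congr _ _ _ fun w hw => ?_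
      have : w ≠ x := by rintro rfl; exact h v hv hx hw
      simp [Function.update_of_ne this]
  induction φ with
  | bot => intros; rfl
  | sZ t => intro s ρ e h; simp only [Scheme.msub, SReal, eval_msub]
  | sE t u => intro s ρ e h; simp only [Scheme.msub, SReal, eval_msub]
  | sS t u => intro s ρ e h; simp only [Scheme.msub, SReal, eval_msub]
  | sA t u w => intro s ρ e h; simp only [Scheme.msub, SReal, eval_msub]
  | sM t u w => intro s ρ e h; simp only [Scheme.msub, SReal, eval_msub]
  | patom i args =>
    intro s ρ e h
    simp only [Scheme.msub, SReal]
    have key : ∀ (n m : ℕ) (hnm : n = m) (a : Fin n → ℕ) (b : Fin m → ℕ),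
        (∀ j : Fin n, a j = b (Fin.cast hnm j)) → f n i a = f m i b := by
      intro n m hnm a b hab
      subst hnm
      congr 1
      funext j
      exact hab j
    rw [key _ _ (List.length_map (as := args) (PTerm.msub s)) _
      (fun j => (args.get j).eval fun v => (s v).eval ρ)]
    intro j
    simp [eval_msub]
  | and φ ψ ih1 ih2 =>
    intro s ρ e h
    simp only [Scheme.msub, SReal, ih1 s ρ _ h.1, ih2 s ρ _ h.2]
  | or φ ψ ih1 ih2 =>
    intro s ρ e h
    simp only [Scheme.msub, SReal, ih1 s ρ _ h.1, ih2 s ρ _ h.2]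
  | imp φ ψ ih1 ih2 =>
    intro s ρ e h
    simp only [Scheme.msub, SReal, ih1 s ρ _ h.1, ih2 s ρ _ h.2]
  | all x φ ih =>
    intro s ρ e h
    simp only [Scheme.msub, SReal]
    exact forall_congr' fun a => exists_congr fun b => and_congr_right fun _ =>
      (ih _ _ b h.2).trans (sreal_congr f φ _ _ b (upd φ s x a ρ h.1))
  | ex x φ ih =>
    intro s ρ e h
    simp only [Scheme.msub, SReal]
    exact (ih _ _ _ h.2).trans (sreal_congr f φ _ _ _ (upd φ s x _ ρ h.1))

/-- The interpretation induced by `f`, the substitution `σ` and the parameter values `τ`. -/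
def substInterp (f : Interp) (σ : ℕ → ℕ → Scheme) (τ : ℕ → ℕ) : Interp := fun n i v =>
  {e | SReal f (fun k => if hk : k < n then v ⟨k, hk⟩ else τ k) e (σ n i)}

/-- The substitution lemma for predicate variables. -/
theorem sreal_substP (f : Interp) (σ : ℕ → ℕ → Scheme) (τ : ℕ → ℕ) (φ : Scheme)
    (hacc : φ.Acceptable σ) : ∀ (ρ : ℕ → ℕ) (e : ℕ),
    (∀ n i, φ.occursP n i → ∀ v ∈ (σ n i).fv \ Finset.range n, ρ v = τ v) →
    (SReal f ρ e (φ.substP σ) ↔ SReal (substInterp f σ τ) ρ e φ) := by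
  induction φ with
  | bot => intros; rfl
  | sZ t => intros; rfl
  | sE t u => intros; rfl
  | sS t u => intros; rfl
  | sA t u w => intros; rfl
  | sM t u w => intros; rfl
  | patom i args =>
    intro ρ e h
    simp only [Scheme.substP]
    rw [sreal_msub f _ _ _ _ hacc]
    change _ ↔ SReal f _ e (σ args.length i)
    refine sreal_congr f _ _ _ e fun v hv => ?_
    by_cases hl : v < args.length
    · simp [argSub, hl]
    · simp only [argSub, hl, dite_false, PTerm.eval]
      exact h _ _ ⟨rfl, rfl⟩ v (by simp [hv]; omega)
  | and φ ψ ih1 ih2 =>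
    intro ρ e h
    simp only [Scheme.substP, SReal, ih1 hacc.1 ρ _ (fun n i ho => h n i (Or.inl ho)),
      ih2 hacc.2 ρ _ (fun n i ho => h n i (Or.inr ho))]
  | or φ ψ ih1 ih2 =>
    intro ρ e h
    simp only [Scheme.substP, SReal, ih1 hacc.1 ρ _ (fun n i ho => h n i (Or.inl ho)),
      ih2 hacc.2 ρ _ (fun n i ho => h n i (Or.inr ho))]
  | imp φ ψ ih1 ih2 =>
    intro ρ e h
    simp only [Scheme.substP, SReal, ih1 hacc.1 ρ _ (fun n i ho => h n i (Or.inl ho)),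
      ih2 hacc.2 ρ _ (fun n i ho => h n i (Or.inr ho))]
  | all x φ ih =>
    intro ρ e h
    simp only [Scheme.substP, SReal]
    refine forall_congr' fun a => exists_congr fun b => and_congr_right fun _ =>
      ih hacc.2 _ b fun n i ho v hv => ?_
    have hx : v ≠ x := by rintro rfl; exact hacc.1 n i ho hv
    rw [Function.update_of_ne hx]
    exact h n i ho v hv
  | ex x φ ih =>
    intro ρ e h
    simp only [Scheme.substP, SReal]
    refine ih hacc.2 _ _ fun n i ho v hv => ?_
    have hx : v ≠ x := by rintro rfl; exact hacc.1 n i ho hv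
    rw [Function.update_of_ne hx]
    exact h n i ho v hv

theorem sreal_foldr_all (φ : Scheme) (l : List ℕ)
    (h : ∃ e, ∀ (f : Interp) (ρ : ℕ → ℕ), SReal f ρ e φ) :
    ∃ e, ∀ (f : Interp) (ρ : ℕ → ℕ), SReal f ρ e (l.foldr Scheme.all φ) := by
  induction l with
  | nil => exact h
  | cons x l ih =>
    obtain ⟨e, he⟩ := ih
    refine ⟨Encodable.encode (Nat.Partrec.Code.const e), fun f ρ => ?_⟩
    simp only [List.foldr_cons, SReal]
    intro a
    refine ⟨e, ?_, he f _⟩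
    simp [K]

theorem sreal_closure (φ : Scheme) (ρ : ℕ → ℕ)
    (h : ∃ e, ∀ (f : Interp) (ρ : ℕ → ℕ), SReal f ρ e φ) :
    ∃ e, ∀ f : Interp, SReal f ρ e φ.univClosure := by
  obtain ⟨e, he⟩ := sreal_foldr_all φ _ h
  exact ⟨e, fun f => he f ρ⟩

end Cpc

/-- if a closed scheme `Φ(P₁,…,Pₙ)` is absolutely realizable then for any
list of schemes acceptable for substitution in it, the universal closure of the
substitutional instance is absolutely realizable. -/
theorem substitution_preserves_absolute_realizability (Φ : Cpc.Scheme)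
    (hcl : Φ.Closed) (σ : ℕ → ℕ → Cpc.Scheme) (hacc : Φ.Acceptable σ)
    (h : ∃ e, ∀ f : Cpc.Interp, Cpc.SReal f Cpc.rho0 e Φ) :
    ∃ e, ∀ f : Cpc.Interp,
      Cpc.SReal f Cpc.rho0 e (Cpc.Scheme.univClosure (Φ.substP σ)) := by
  obtain ⟨e, he⟩ := h
  refine Cpc.sreal_closure _ _ ⟨e, fun f ρ => ?_⟩
  refine (Cpc.sreal_substP f σ ρ Φ hacc ρ e (fun n i _ v _ => rfl)).2 ?_
  refine (Cpc.sreal_congr _ Φ ρ Cpc.rho0 e ?_).2 (he _)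
  intro v hv
  have h0 : Φ.fv = ∅ := hcl
  simp [h0] at hv
end

section
/- The closed arithmetical formula Q (the conjunction of the formulas A₁–A₂₈) is realizable under Kleene recursive realizability. -/
set_option linter.unusedVariables false

namespace Cpc

/-! ### Evaluation of atoms -/

theorem atom_congr {β : Type} (F : (n : ℕ) → (Fin n → ℕ) → β) (l l' : List PTerm) (ρ ρ' : ℕ → ℕ)
    (hl : l.map (PTerm.eval ρ) = l'.map (PTerm.eval ρ')) :
    F l.length (fun j => (l.get j).eval ρ) = F l'.length (fun j => (l'.get j).eval ρ') := by
  have key : ∀ (l : List PTerm) (ρ : ℕ → ℕ) (m : List ℕ), l.map (PTerm.eval ρ) = m →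
      F l.length (fun j => (l.get j).eval ρ) = F m.length (fun j => m.get j) := by
    intro l ρ m hm
    subst hm
    have : ∀ (n : ℕ) (v : Fin n → ℕ) (n' : ℕ) (v' : Fin n' → ℕ) (h : n = n'),
        (∀ j : Fin n, v j = v' (Fin.cast h j)) → F n v = F n' v' := by
      intro n v n' v' h hv
      subst h
      congr 1
      funext j
      exact hv j
    exact this _ _ _ _ (by simp) (by intro j; simp)
  rw [key l ρ _ rfl, key l' ρ' _ rfl, hl]

/-! ### Substitution of variables below `10` -/

/-- Renaming substitutions which act only below `10`. -/
def Ren (s : ℕ → PTerm) : Prop :=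
  (∀ v, 10 ≤ v → s v = .var v) ∧ (∀ v, v < 10 → ∃ w, w < 10 ∧ s v = .var w)

theorem Ren.under {s : ℕ → PTerm} (hs : Ren s) {x : ℕ} (hx : 10 ≤ x) :
    (fun v => if v = x then PTerm.var x else s v) = s := by
  funext v
  split
  · next h => subst h; exact (hs.1 v hx).symm
  · rfl

theorem Ren.upd {s : ℕ → PTerm} (hs : Ren s) {x : ℕ} (hx : 10 ≤ x) (ρ : ℕ → ℕ) (a : ℕ) :
    (fun v => (s v).eval (Function.update ρ x a)) =
      Function.update (fun v => (s v).eval ρ) x a := by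
  funext v
  by_cases hv : 10 ≤ v
  · rw [hs.1 v hv]
    by_cases h : v = x
    · subst h; simp [PTerm.eval]
    · simp [PTerm.eval, h, hs.1 v hv]
  · obtain ⟨w, hw, e⟩ := hs.2 v (by omega)
    have h1 : w ≠ x := by omega
    have h2 : v ≠ x := by omega
    simp [e, PTerm.eval, h1, h2]

theorem map_msub (s : ℕ → PTerm) (ρ : ℕ → ℕ) (l : List PTerm) :
    (l.map (PTerm.msub s)).map (PTerm.eval ρ) =
      l.map (PTerm.eval fun v => (s v).eval ρ) := by
  rw [List.map_map]
  apply List.map_congr_left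
  intro t _
  cases t <;> rfl

theorem realizes_msub {s : ℕ → PTerm} (hs : Ren s) (f : Interp) (φ : PFml)
    (hb : ∀ v ∈ φ.bv, 10 ≤ v) :
    ∀ ρ e, Realizes f ρ e (φ.msub s) ↔ Realizes f (fun v => (s v).eval ρ) e φ := by
  induction φ with
  | bot => intro ρ e; rfl
  | atom i args =>
    intro ρ e
    have := atom_congr (fun n v => e ∈ f n i v) (args.map (PTerm.msub s)) args ρ
      (fun v => (s v).eval ρ) (map_msub s ρ args)
    exact iff_of_eq this
  | and φ ψ ih1 ih2 =>
    intro ρ e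
    simp only [PFml.bv, Finset.mem_union] at hb
    simp only [PFml.msub, Realizes]
    rw [ih1 (fun v h => hb v (.inl h)), ih2 (fun v h => hb v (.inr h))]
  | or φ ψ ih1 ih2 =>
    intro ρ e
    simp only [PFml.bv, Finset.mem_union] at hb
    simp only [PFml.msub, Realizes]
    rw [ih1 (fun v h => hb v (.inl h)), ih2 (fun v h => hb v (.inr h))]
  | imp φ ψ ih1 ih2 =>
    intro ρ e
    simp only [PFml.bv, Finset.mem_union] at hb
    simp only [PFml.msub, Realizes, ih1 (fun v h => hb v (.inl h)),
      ih2 (fun v h => hb v (.inr h))]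
  | all x φ ih =>
    intro ρ e
    simp only [PFml.bv, Finset.mem_insert] at hb
    have hx := hb x (.inl rfl)
    simp only [PFml.msub, Realizes, hs.under hx, ih (fun v h => hb v (.inr h)), hs.upd hx]
  | ex x φ ih =>
    intro ρ e
    simp only [PFml.bv, Finset.mem_insert] at hb
    have hx := hb x (.inl rfl)
    simp only [PFml.msub, Realizes, hs.under hx, ih (fun v h => hb v (.inr h)), hs.upd hx]

theorem true_msub {s : ℕ → PTerm} (hs : Ren s) (φ : PFml)
    (hb : ∀ v ∈ φ.bv, 10 ≤ v) :
    ∀ ρ, TrueStd ρ (φ.msub s) ↔ TrueStd (fun v => (s v).eval ρ) φ := by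
  induction φ with
  | bot => intro ρ; rfl
  | atom i args =>
    intro ρ
    have := atom_congr (fun n v => arithStd n i v) (args.map (PTerm.msub s)) args ρ
      (fun v => (s v).eval ρ) (map_msub s ρ args)
    exact iff_of_eq this
  | and φ ψ ih1 ih2 =>
    intro ρ
    simp only [PFml.bv, Finset.mem_union] at hb
    simp only [PFml.msub, TrueStd]
    rw [ih1 (fun v h => hb v (.inl h)), ih2 (fun v h => hb v (.inr h))]
  | or φ ψ ih1 ih2 =>
    intro ρ
    simp only [PFml.bv, Finset.mem_union] at hb
    simp only [PFml.msub, TrueStd]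
    rw [ih1 (fun v h => hb v (.inl h)), ih2 (fun v h => hb v (.inr h))]
  | imp φ ψ ih1 ih2 =>
    intro ρ
    simp only [PFml.bv, Finset.mem_union] at hb
    simp only [PFml.msub, TrueStd, ih1 (fun v h => hb v (.inl h)),
      ih2 (fun v h => hb v (.inr h))]
  | all x φ ih =>
    intro ρ
    simp only [PFml.bv, Finset.mem_insert] at hb
    have hx := hb x (.inl rfl)
    simp only [PFml.msub, TrueStd, hs.under hx, ih (fun v h => hb v (.inr h)), hs.upd hx]
  | ex x φ ih =>
    intro ρ
    simp only [PFml.bv, Finset.mem_insert] at hb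
    have hx := hb x (.inl rfl)
    simp only [PFml.msub, TrueStd, hs.under hx, ih (fun v h => hb v (.inr h)), hs.upd hx]

/-! ### Pairing by prime exponents, and the s-m-n theorem -/

/-- The number `2^a * 3^b`. -/
def pr (a b : ℕ) : ℕ := 2 ^ a * 3 ^ b

theorem pexp0_pr (a b : ℕ) : pexp 0 (pr a b) = a := by
  unfold pexp pr
  rw [Nat.nth_prime_zero_eq_two, Nat.factorization_mul (by positivity) (by positivity),
    Nat.factorization_pow, Nat.factorization_pow]
  have : Nat.factorization 3 2 = 0 := Nat.factorization_eq_zero_of_not_dvd (by decide)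
  simp [this, Nat.prime_two.factorization_self]

theorem pexp1_pr (a b : ℕ) : pexp 1 (pr a b) = b := by
  unfold pexp pr
  rw [Nat.nth_prime_one_eq_three, Nat.factorization_mul (by positivity) (by positivity),
    Nat.factorization_pow, Nat.factorization_pow]
  have : Nat.factorization 2 3 = 0 := Nat.factorization_eq_zero_of_not_dvd (by decide)
  simp [this, Nat.prime_three.factorization_self]

theorem primrec_pow : Primrec₂ ((· ^ ·) : ℕ → ℕ → ℕ) :=
  Primrec₂.unpaired'.1 Nat.Primrec.pow

theorem primrec_pr : Primrec₂ pr :=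
  Primrec.nat_mul.comp (primrec_pow.comp (Primrec.const 2) Primrec.fst)
    (primrec_pow.comp (Primrec.const 3) Primrec.snd)

theorem smn {α : Type} [Primcodable α] {f : α × ℕ →. ℕ} (hf : Partrec f) :
    ∃ c : α → ℕ, Computable c ∧ ∀ a x, K (c a) x = f (a, x) := by
  obtain ⟨cf, hcf⟩ := Nat.Partrec.Code.exists_code.1 hf
  refine ⟨fun a => Encodable.encode (Nat.Partrec.Code.curry cf (Encodable.encode a)), ?_, ?_⟩
  · exact (Primrec.encode.comp (Nat.Partrec.Code.primrec₂_curry.comp (Primrec.const cf)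
      Primrec.encode)).to_comp
  · intro a x
    unfold K
    rw [Denumerable.ofNat_encode, Nat.Partrec.Code.eval_curry, hcf]
    have : Nat.pair (Encodable.encode a) x = Encodable.encode (a, x) := by simp
    rw [this]
    show ((Encodable.decode (Encodable.encode (a, x)) : Option (α × ℕ)) : Part (α × ℕ)).bind
      (fun b => Part.map Encodable.encode (f b)) = f (a, x)
    rw [Encodable.encodek]
    show (Part.some (a, x)).bind (fun b => Part.map Encodable.encode (f b)) = f (a, x)
    rw [Part.bind_some]
    exact Part.map_id' (fun _ => rfl) _

/-! ### Uniform realizability -/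

/-- A primitive recursive family of valuations. -/
def PV {α : Type} [Primcodable α] (ρ : α → ℕ → ℕ) : Prop := ∀ v, Primrec fun a => ρ a v

theorem PV.upd {α β : Type} [Primcodable α] [Primcodable β] {ρ : α → ℕ → ℕ} (h : PV ρ) (x : ℕ)
    {p : β → α} {q : β → ℕ} (hp : Primrec p) (hq : Primrec q) :
    PV (fun b => Function.update (ρ (p b)) x (q b)) := by
  intro v
  by_cases hv : v = x
  · subst hv; simpa using hq
  · simpa [hv] using (h v).comp hp

theorem PV.term {α : Type} [Primcodable α] {ρ : α → ℕ → ℕ} (h : PV ρ) (t : PTerm) :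
    Primrec fun a => t.eval (ρ a) := by
  cases t with
  | var v => exact h v
  | const c => exact Primrec.const c

/-- Realizability implies truth. -/
def Snd (φ : PFml) : Prop := ∀ ρ e, Realizes stdInterp ρ e φ → TrueStd ρ φ

/-- Truth implies realizability, uniformly. -/
def Cmp (φ : PFml) : Prop := ∀ (α : Type) [Primcodable α] (ρ : α → ℕ → ℕ), PV ρ →
  ∃ R : α →. ℕ, Partrec R ∧ ∀ a, TrueStd (ρ a) φ →
    ∃ e ∈ R a, Realizes stdInterp (ρ a) e φ

/-- Realizability and truth coincide (non-uniformly). -/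
def Eqv (φ : PFml) : Prop := ∀ ρ, (∃ e, Realizes stdInterp ρ e φ) ↔ TrueStd ρ φ

/-- Uniform equivalence of truth and realizability. -/
def Good (φ : PFml) : Prop := Snd φ ∧ Cmp φ

/-- Truth is semidecidable, uniformly. -/
def SD (φ : PFml) : Prop := ∀ (α : Type) [Primcodable α] (ρ : α → ℕ → ℕ), PV ρ →
  ∃ D : α → ℕ → Prop, PrimrecRel D ∧ ∀ a, TrueStd (ρ a) φ ↔ ∃ n, D a n

/-- Truth is primitive recursive, uniformly. -/
def Dec (φ : PFml) : Prop := ∀ (α : Type) [Primcodable α] (ρ : α → ℕ → ℕ), PV ρ →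
  PrimrecPred fun a => TrueStd (ρ a) φ

theorem Dec.sd {φ : PFml} (h : Dec φ) : SD φ := by
  intro α _ ρ hρ
  exact ⟨fun a _ => TrueStd (ρ a) φ, (h α ρ hρ).comp Primrec.fst, fun a => by simp⟩

theorem Good.eqv {φ : PFml} (h : Good φ) : Eqv φ := by
  intro ρ
  refine ⟨fun ⟨e, he⟩ => h.1 ρ e he, fun ht => ?_⟩
  obtain ⟨R, -, hR⟩ := h.2 Unit (fun _ => ρ) (fun v => Primrec.const _)
  obtain ⟨e, -, he⟩ := hR () ht
  exact ⟨e, he⟩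

theorem good_bot : Good .bot :=
  ⟨fun _ _ h => h, fun _ _ _ _ => ⟨fun _ => Part.some 0, Computable.const 0, fun _ h => h.elim⟩⟩

theorem good_atom (i : ℕ) (l : List PTerm) : Good (.atom i l) := by
  refine ⟨fun ρ e h => h.2, fun α _ ρ _ => ⟨fun _ => Part.some 0, Computable.const 0, fun a h => ?_⟩⟩
  exact ⟨0, Part.mem_some _, rfl, h⟩

theorem good_and {φ ψ : PFml} (h1 : Good φ) (h2 : Good ψ) : Good (φ.and ψ) := by
  refine ⟨fun ρ e h => ⟨h1.1 _ _ h.1, h2.1 _ _ h.2⟩, fun α _ ρ hρ => ?_⟩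
  obtain ⟨R1, c1, k1⟩ := h1.2 α ρ hρ
  obtain ⟨R2, c2, k2⟩ := h2.2 α ρ hρ
  refine ⟨fun a => (R1 a).bind fun x => (R2 a).map fun y => pr x y, ?_, ?_⟩
  · refine c1.bind (Partrec.map (c2.comp Computable.fst) ?_)
    exact (primrec_pr.comp (Primrec.snd.comp Primrec.fst) Primrec.snd).to_comp
  · intro a ht
    obtain ⟨x, hx, rx⟩ := k1 a ht.1
    obtain ⟨y, hy, ry⟩ := k2 a ht.2
    refine ⟨pr x y, Part.mem_bind hx (Part.mem_map _ hy), ?_⟩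
    simp only [Realizes, pexp0_pr, pexp1_pr]
    exact ⟨rx, ry⟩

theorem good_imp {φ ψ : PFml} (h1 : Eqv φ) (h2 : Good ψ) : Good (φ.imp ψ) := by
  refine ⟨fun ρ e h ht => ?_, fun α _ ρ hρ => ?_⟩
  · obtain ⟨a, ha⟩ := (h1 ρ).2 ht
    obtain ⟨b, -, hb⟩ := h a ha
    exact h2.1 _ _ hb
  · obtain ⟨R2, c2, k2⟩ := h2.2 α ρ hρ
    obtain ⟨c, hc, hK⟩ := smn (f := fun p : α × ℕ => R2 p.1) (c2.comp Computable.fst)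
    refine ⟨fun a => Part.some (c a), hc, fun a ht => ⟨c a, Part.mem_some _, ?_⟩⟩
    intro x hx
    rw [hK]
    exact k2 a (ht ((h1 _).1 ⟨x, hx⟩))

theorem good_all {φ : PFml} (x : ℕ) (h : Good φ) : Good (.all x φ) := by
  refine ⟨fun ρ e hr a => ?_, fun α _ ρ hρ => ?_⟩
  · obtain ⟨b, -, hb⟩ := hr a
    exact h.1 _ _ hb
  · obtain ⟨R, c, k⟩ := h.2 (α × ℕ) (fun b => Function.update (ρ b.1) x b.2)
      (hρ.upd x Primrec.fst Primrec.snd)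
    obtain ⟨c, hc, hK⟩ := smn c
    refine ⟨fun a => Part.some (c a), hc, fun a ht => ⟨c a, Part.mem_some _, ?_⟩⟩
    intro x
    rw [hK]
    exact k (a, x) (ht x)

theorem good_alls {φ : PFml} (xs : List ℕ) (h : Good φ) : Good (alls xs φ) := by
  induction xs with
  | nil => exact h
  | cons x xs ih => exact good_all x ih

theorem eqv_ex {φ : PFml} (x : ℕ) (h : Eqv φ) : Eqv (.ex x φ) := by
  intro ρ
  constructor
  · rintro ⟨e, he⟩
    exact ⟨_, (h _).1 ⟨_, he⟩⟩
  · rintro ⟨a, ha⟩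
    obtain ⟨b, hb⟩ := (h _).2 ha
    refine ⟨pr a b, ?_⟩
    simp only [Realizes, pexp0_pr, pexp1_pr]
    exact hb

theorem good_not {φ : PFml} (h : Eqv φ) : Good φ.not := good_imp h good_bot

theorem search {α : Type} [Primcodable α] {D : α → ℕ → Prop} (hD : PrimrecRel D) :
    ∃ S : α →. ℕ, Partrec S ∧ ∀ a, (∃ n, D a n) → ∃ n ∈ S a, D a n := by
  classical
  have h1 : Primrec₂ fun a n => decide (D a n) := hD.decide
  refine ⟨fun a => Nat.rfind fun n => Part.some (decide (D a n)),
    Partrec.rfind (p := fun a n => Part.some (decide (D a n))) h1.to_comp, ?_⟩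
  rintro a ⟨m, hm⟩
  obtain ⟨n, hn, -⟩ := Nat.rfind_min' (p := fun n => decide (D a n)) (m := m) (by simpa using hm)
  refine ⟨n, hn, ?_⟩
  have := Nat.rfind_spec hn
  simpa using this

theorem good_ex {φ : PFml} (x : ℕ) (h : Good φ) (hs : SD φ) : Good (.ex x φ) := by
  refine ⟨fun ρ e hr => ⟨_, h.1 _ _ hr⟩, fun α _ ρ hρ => ?_⟩
  have hρ' := hρ.upd x (Primrec.fst (α := α) (β := ℕ)) Primrec.snd
  obtain ⟨R, c, k⟩ := h.2 (α × ℕ) _ hρ'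
  obtain ⟨D, hD, hDt⟩ := hs (α × ℕ) _ hρ'
  obtain ⟨S, cS, hS⟩ := search (α := α) (D := fun a n => D (a, n.unpair.1) n.unpair.2)
    (hD.comp (Primrec.fst.pair (Primrec.fst.comp (Primrec.unpair.comp Primrec.snd)))
      (Primrec.snd.comp (Primrec.unpair.comp Primrec.snd)))
  refine ⟨fun a => (S a).bind fun n => (R (a, n.unpair.1)).map fun e => pr n.unpair.1 e, ?_, ?_⟩
  · refine cS.bind (Partrec.map (c.comp ?_) ?_)
    · exact (Primrec.fst.pair (Primrec.fst.comp (Primrec.unpair.comp Primrec.snd))).to_comp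
    · exact (primrec_pr.comp (Primrec.fst.comp (Primrec.unpair.comp
        (Primrec.snd.comp Primrec.fst))) Primrec.snd).to_comp
  · rintro a ⟨b, hb⟩
    obtain ⟨m, hm⟩ := (hDt (a, b)).1 hb
    obtain ⟨n, hn, hd⟩ := hS a ⟨Nat.pair b m, by simpa using hm⟩
    obtain ⟨e, he, hr⟩ := k (a, n.unpair.1) ((hDt _).2 ⟨_, hd⟩)
    refine ⟨pr n.unpair.1 e, Part.mem_bind hn (Part.mem_map _ he), ?_⟩
    simp only [Realizes, pexp0_pr, pexp1_pr]
    exact hr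

theorem good_or {φ ψ : PFml} (h1 : Good φ) (h2 : Good ψ) (s1 : SD φ) (s2 : SD ψ) :
    Good (φ.or ψ) := by
  classical
  refine ⟨fun ρ e hr => hr.imp (fun h => h1.1 _ _ h.2) (fun h => h2.1 _ _ h.2),
    fun α _ ρ hρ => ?_⟩
  obtain ⟨R1, c1, k1⟩ := h1.2 α ρ hρ
  obtain ⟨R2, c2, k2⟩ := h2.2 α ρ hρ
  obtain ⟨D1, p1, d1⟩ := s1 α ρ hρ
  obtain ⟨D2, p2, d2⟩ := s2 α ρ hρ
  obtain ⟨S, cS, hS⟩ := search (α := α) (D := fun a n => D1 a n ∨ D2 a n) (PrimrecPred.or p1 p2)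
  refine ⟨fun a => (S a).bind fun n => bif decide (D1 a n) then (R1 a).map (fun e => pr 0 e)
    else (R2 a).map (fun e => pr 1 e), ?_, ?_⟩
  · refine cS.bind (Partrec.cond (p1.decide).to_comp (Partrec.map (c1.comp Computable.fst) ?_)
      (Partrec.map (c2.comp Computable.fst) ?_))
    · exact (primrec_pr.comp (Primrec.const 0) Primrec.snd).to_comp
    · exact (primrec_pr.comp (Primrec.const 1) Primrec.snd).to_comp
  · intro a ht
    obtain ⟨n, hn, hd⟩ := hS a (by
      rcases ht with h | h
      · exact ((d1 a).1 h).imp fun _ => Or.inl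
      · exact ((d2 a).1 h).imp fun _ => Or.inr)
    by_cases hc : D1 a n
    · obtain ⟨e, he, hr⟩ := k1 a ((d1 a).2 ⟨n, hc⟩)
      refine ⟨pr 0 e, Part.mem_bind hn ?_, ?_⟩
      · simpa [hc] using ⟨e, he, rfl⟩
      · simp only [Realizes, pexp0_pr, pexp1_pr]
        exact .inl ⟨trivial, hr⟩
    · obtain ⟨e, he, hr⟩ := k2 a ((d2 a).2 ⟨n, hd.resolve_left hc⟩)
      refine ⟨pr 1 e, Part.mem_bind hn ?_, ?_⟩
      · simpa [hc] using ⟨e, he, rfl⟩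
      · simp only [Realizes, pexp0_pr, pexp1_pr]
        exact .inr ⟨trivial, hr⟩

theorem good_msub {s : ℕ → PTerm} (hs : Ren s) {φ : PFml} (hb : ∀ v ∈ φ.bv, 10 ≤ v)
    (h : Good φ) : Good (φ.msub s) := by
  refine ⟨fun ρ e hr => (true_msub hs φ hb ρ).2 (h.1 _ _ ((realizes_msub hs _ φ hb ρ e).1 hr)),
    fun α _ ρ hρ => ?_⟩
  obtain ⟨R, c, k⟩ := h.2 α (fun a v => (s v).eval (ρ a)) (fun v => hρ.term (s v))
  refine ⟨R, c, fun a ht => ?_⟩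
  obtain ⟨e, he, hr⟩ := k a ((true_msub hs φ hb _).1 ht)
  exact ⟨e, he, (realizes_msub hs _ φ hb _ e).2 hr⟩

/-! ### Semidecidability -/

theorem sd_and {φ ψ : PFml} (s1 : SD φ) (s2 : SD ψ) : SD (φ.and ψ) := by
  intro α _ ρ hρ
  obtain ⟨D1, p1, d1⟩ := s1 α ρ hρ
  obtain ⟨D2, p2, d2⟩ := s2 α ρ hρ
  refine ⟨fun a n => D1 a n.unpair.1 ∧ D2 a n.unpair.2, ?_, fun a => ?_⟩
  · exact PrimrecPred.and
      (p1.comp Primrec.fst (Primrec.fst.comp (Primrec.unpair.comp Primrec.snd)))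
      (p2.comp Primrec.fst (Primrec.snd.comp (Primrec.unpair.comp Primrec.snd)))
  · simp only [TrueStd, d1, d2]
    constructor
    · rintro ⟨⟨n, hn⟩, ⟨m, hm⟩⟩
      exact ⟨Nat.pair n m, by simpa using ⟨hn, hm⟩⟩
    · rintro ⟨n, h1, h2⟩
      exact ⟨⟨_, h1⟩, ⟨_, h2⟩⟩

theorem sd_or {φ ψ : PFml} (s1 : SD φ) (s2 : SD ψ) : SD (φ.or ψ) := by
  intro α _ ρ hρ
  obtain ⟨D1, p1, d1⟩ := s1 α ρ hρ
  obtain ⟨D2, p2, d2⟩ := s2 α ρ hρ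
  refine ⟨fun a n => D1 a n ∨ D2 a n, PrimrecPred.or p1 p2, fun a => ?_⟩
  simp only [TrueStd, d1, d2, exists_or]

theorem sd_ex {φ : PFml} (x : ℕ) (hs : SD φ) : SD (.ex x φ) := by
  intro α _ ρ hρ
  obtain ⟨D, hD, hDt⟩ := hs (α × ℕ) _ (hρ.upd x (Primrec.fst (α := α) (β := ℕ)) Primrec.snd)
  refine ⟨fun a n => D (a, n.unpair.1) n.unpair.2,
    (hD.comp (Primrec.fst.pair (Primrec.fst.comp (Primrec.unpair.comp Primrec.snd)))
      (Primrec.snd.comp (Primrec.unpair.comp Primrec.snd))), fun a => ?_⟩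
  constructor
  · rintro ⟨b, hb⟩
    obtain ⟨m, hm⟩ := (hDt (a, b)).1 hb
    exact ⟨Nat.pair b m, by simpa using hm⟩
  · rintro ⟨n, hn⟩
    exact ⟨n.unpair.1, (hDt (a, n.unpair.1)).2 ⟨_, hn⟩⟩

theorem eval_upd {t : PTerm} {x : ℕ} (h : x ∉ t.fv) (ρ : ℕ → ℕ) (a : ℕ) :
    t.eval (Function.update ρ x a) = t.eval ρ := by
  cases t with
  | var v =>
    have : v ≠ x := fun e => h (by simp [PTerm.fv, e])
    simp [PTerm.eval, this]
  | const c => rfl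

theorem true_leF {x z : ℕ} {t : PTerm} (hx : x ∉ t.fv) (hz : z ∉ t.fv) (hzx : z ≠ x)
    (ρ : ℕ → ℕ) (a : ℕ) : TrueStd (Function.update ρ x a) (leF z x t) ↔ a ≤ t.eval ρ := by
  have : ∀ c, TrueStd (Function.update (Function.update ρ x a) z c)
      (vA (.var z) (.var x) t) ↔ c + a = t.eval ρ := by
    intro c
    have h2 : t.eval (Function.update (Function.update ρ x a) z c) = t.eval ρ := by
      rw [eval_upd hz, eval_upd hx]
    have h3 : TrueStd (Function.update (Function.update ρ x a) z c)
      (vA (.var z) (.var x) t) ↔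
        (PTerm.var z).eval (Function.update (Function.update ρ x a) z c) +
        (PTerm.var x).eval (Function.update (Function.update ρ x a) z c) =
        t.eval (Function.update (Function.update ρ x a) z c) := Iff.rfl
    rw [h3, h2]
    simp [PTerm.eval, hzx.symm]
  simp only [leF, TrueStd]
  constructor
  · rintro ⟨c, hc⟩
    have := (this c).1 hc
    omega
  · intro h
    exact ⟨t.eval ρ - a, (this _).2 (by omega)⟩

theorem pr_ball {α : Type} [Primcodable α] {P : α → ℕ → Prop} (hP : PrimrecRel P) {t : α → ℕ}
    (ht : Primrec t) : PrimrecPred fun a => ∀ x ≤ t a, P a x := by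
  have h := (PrimrecRel.forall_mem_list (R := fun (x : ℕ) (a : α) => P a x) hP.swap).comp
    (Primrec.list_range.comp (Primrec.succ.comp ht)) Primrec.id
  exact h.of_eq fun a => by simp

theorem pr_bex {α : Type} [Primcodable α] {P : α → ℕ → Prop} (hP : PrimrecRel P) {t : α → ℕ}
    (ht : Primrec t) : PrimrecPred fun a => ∃ x ≤ t a, P a x := by
  have h := (PrimrecRel.exists_mem_list (R := fun (x : ℕ) (a : α) => P a x) hP.swap).comp
    (Primrec.list_range.comp (Primrec.succ.comp ht)) Primrec.id
  exact h.of_eq fun a => by simp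

theorem sd_ball {x z : ℕ} {t : PTerm} {φ : PFml} (hx : x ∉ t.fv) (hz : z ∉ t.fv) (hzx : z ≠ x)
    (hs : SD φ) : SD (.all x ((leF z x t).imp φ)) := by
  intro α _ ρ hρ
  obtain ⟨D, hD, hDt⟩ := hs (α × ℕ) _ (hρ.upd x (Primrec.fst (α := α) (β := ℕ)) Primrec.snd)
  refine ⟨fun a n => ∀ x ≤ t.eval (ρ a), ∃ m ≤ n, D (a, x) m, ?_, fun a => ?_⟩
  · refine pr_ball (α := α × ℕ) (P := fun p x => ∃ m ≤ p.2, D (p.1, x) m)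
      (t := fun p => t.eval (ρ p.1)) ?_ ((hρ.term t).comp Primrec.fst)
    refine pr_bex (α := (α × ℕ) × ℕ) (P := fun q m => D (q.1.1, q.2) m)
      (t := fun q => q.1.2) ?_ (Primrec.snd.comp Primrec.fst)
    exact hD.comp ((Primrec.fst.comp (Primrec.fst.comp Primrec.fst)).pair
      (Primrec.snd.comp Primrec.fst)) Primrec.snd
  · have hD' : ∀ b, TrueStd (Function.update (ρ a) x b) φ ↔ ∃ n, D (a, b) n := fun b => hDt (a, b)
    simp only [TrueStd, hD']
    simp only [true_leF hx hz hzx]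
    constructor
    · intro h
      choose! f hf using h
      refine ⟨∑ b ∈ Finset.range (t.eval (ρ a) + 1), f b, fun b hb => ⟨f b, ?_, hf b hb⟩⟩
      exact Finset.single_le_sum (f := f) (fun _ _ => Nat.zero_le _)
        (Finset.mem_range.2 (by omega))
    · rintro ⟨n, h⟩ b hb
      obtain ⟨m, -, hm⟩ := h b hb
      exact ⟨m, hm⟩

theorem dec_atom {i : ℕ} {l : List PTerm} (h : arithSlot l.length i) : Dec (.atom i l) := by
  intro α _ ρ hρ
  rcases h with ⟨h1, h2⟩ | ⟨h1, h2⟩ | ⟨h1, h2⟩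
  · obtain ⟨t, rfl⟩ := List.length_eq_one_iff.1 h1
    subst h2
    exact Primrec.eq.comp (hρ.term t) (Primrec.const 0)
  · obtain ⟨t, u, rfl⟩ := List.length_eq_two.1 h1
    interval_cases i
    · exact Primrec.eq.comp (hρ.term t) (hρ.term u)
    · exact Primrec.eq.comp (Primrec.succ.comp (hρ.term t)) (hρ.term u)
  · obtain ⟨t, u, w, rfl⟩ := List.length_eq_three.1 h1
    interval_cases i
    · exact Primrec.eq.comp (Primrec.nat_add.comp (hρ.term t) (hρ.term u)) (hρ.term w)
    · exact Primrec.eq.comp (Primrec.nat_mul.comp (hρ.term t) (hρ.term u)) (hρ.term w)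

theorem dec_delta0 {φ : PFml} (h : IsDelta0 φ) : Dec φ := by
  induction h with
  | bot =>
    intro α _ ρ hρ
    exact ⟨fun _ => .isFalse id, (Primrec.const false).of_eq fun a => rfl⟩
  | atom h => exact dec_atom h
  | and _ _ h1 h2 => exact fun α _ ρ hρ => (h1 α ρ hρ).and (h2 α ρ hρ)
  | or _ _ h1 h2 => exact fun α _ ρ hρ => (h1 α ρ hρ).or (h2 α ρ hρ)
  | imp _ _ h1 h2 =>
    exact fun α _ ρ hρ => ((h1 α ρ hρ).not.or (h2 α ρ hρ)).of_eq fun a => by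
      simp only [TrueStd]; tauto
  | @ball x z t φ hx hz hzx _ ih =>
    intro α _ ρ hρ
    have := ih (α × ℕ) _ (hρ.upd x (Primrec.fst (α := α) (β := ℕ)) Primrec.snd)
    refine (pr_ball (P := fun a n => TrueStd (Function.update (ρ a) x n) φ) this
      (hρ.term t)).of_eq fun a => ?_
    simp only [TrueStd]
    simp only [true_leF hx hz hzx]
  | @bex x z t φ hx hz hzx _ ih =>
    intro α _ ρ hρ
    have := ih (α × ℕ) _ (hρ.upd x (Primrec.fst (α := α) (β := ℕ)) Primrec.snd)
    refine (pr_bex (P := fun a n => TrueStd (Function.update (ρ a) x n) φ) this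
      (hρ.term t)).of_eq fun a => ?_
    simp only [TrueStd]
    simp only [true_leF hx hz hzx]

theorem dec_vA (t u w : PTerm) : Dec (vA t u w) := dec_atom (.inr (.inr ⟨rfl, by omega⟩))

theorem sd_leF (z x : ℕ) (t : PTerm) : SD (leF z x t) := sd_ex _ (dec_vA _ _ _).sd

theorem good_leF (z x : ℕ) (t : PTerm) : Good (leF z x t) :=
  good_ex _ (good_atom _ _) (dec_vA _ _ _).sd

theorem good_delta0 {φ : PFml} (h : IsDelta0 φ) : Good φ := by
  induction h with
  | bot => exact good_bot
  | atom h => exact good_atom _ _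
  | and _ _ h1 h2 => exact good_and h1 h2
  | or d1 d2 h1 h2 => exact good_or h1 h2 (dec_delta0 d1).sd (dec_delta0 d2).sd
  | imp _ _ h1 h2 => exact good_imp h1.eqv h2
  | ball _ _ _ _ ih => exact good_all _ (good_imp (good_leF _ _ _).eqv ih)
  | bex _ _ _ d ih =>
    exact good_ex _ (good_and (good_leF _ _ _) ih) (sd_and (sd_leF _ _ _) (dec_delta0 d).sd)

theorem sd_sigma {φ : PFml} (h : IsSigma φ) : SD φ := by
  induction h with
  | delta0 d => exact (dec_delta0 d).sd
  | and _ _ h1 h2 => exact sd_and h1 h2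
  | or _ _ h1 h2 => exact sd_or h1 h2
  | ball hx hz hzx _ ih => exact sd_ball hx hz hzx ih
  | bex _ _ _ _ ih => exact sd_ex _ (sd_and (sd_leF _ _ _) ih)
  | ex _ ih => exact sd_ex _ ih

theorem good_sigma {φ : PFml} (h : IsSigma φ) : Good φ := by
  induction h with
  | delta0 d => exact good_delta0 d
  | and _ _ h1 h2 => exact good_and h1 h2
  | or d1 d2 h1 h2 => exact good_or h1 h2 (sd_sigma d1) (sd_sigma d2)
  | ball _ _ _ _ ih => exact good_all _ (good_imp (good_leF _ _ _).eqv ih)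
  | bex _ _ _ d ih =>
    exact good_ex _ (good_and (good_leF _ _ _) ih) (sd_and (sd_leF _ _ _) (sd_sigma d))
  | ex d ih => exact good_ex _ ih (sd_sigma d)

end Cpc

namespace Cpc

/-! ### The enumeration `g` -/

theorem lrAux_row (n s : ℕ) (hn : lrAux n = (0, s)) : ∀ k, k ≤ s → lrAux (n + k) = (k, s - k) := by
  intro k
  induction k with
  | zero => intro _; simpa using hn
  | succ k ih =>
    intro hk
    rw [← Nat.add_assoc, lrAux, ih (by omega)]
    have : ¬ (s - k = 0) := by omega
    simp only [this, if_false, Prod.mk.injEq, true_and]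
    omega

theorem lrAux_col (s : ℕ) : ∃ n, lrAux n = (0, s) := by
  induction s with
  | zero => exact ⟨0, rfl⟩
  | succ s ih =>
    obtain ⟨n, hn⟩ := ih
    refine ⟨n + s + 1, ?_⟩
    rw [lrAux, lrAux_row n s hn s le_rfl]
    simp

theorem lrAux_surj (x y : ℕ) : ∃ n, lrAux n = (x, y) := by
  obtain ⟨n, hn⟩ := lrAux_col (x + y)
  exact ⟨n + x, by rw [lrAux_row n _ hn x (by omega)]; simp⟩

theorem lstar_succ (v x : ℕ) : lstar v (x + 1) = lstar (cl v) x := by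
  induction x with
  | zero => rfl
  | succ x ih => rw [lstar, ih, lstar]

theorem g_enum (z : ℕ) : ∀ P : ℕ → Prop, ∃ v, ∀ x ≤ z, (g v x = 1 ↔ P x) := by
  classical
  induction z with
  | zero =>
    intro P
    obtain ⟨v, hv⟩ := lrAux_surj 0 (if P 0 then 1 else 0)
    refine ⟨v, fun x hx => ?_⟩
    obtain rfl : x = 0 := by omega
    simp [g, lstar, cr, hv]
  | succ z ih =>
    intro P
    obtain ⟨w, hw⟩ := ih fun x => P (x + 1)
    obtain ⟨v, hv⟩ := lrAux_surj w (if P 0 then 1 else 0)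
    refine ⟨v, fun x hx => ?_⟩
    cases x with
    | zero => simp [g, lstar, cr, hv]
    | succ x =>
      rw [← hw x (by omega), g, lstar_succ, g]
      simp [cl, hv]

theorem primrec_lrAux : Primrec lrAux := by
  have hg : Primrec₂ fun (_ : ℕ) (p : ℕ × ℕ) =>
      if p.2 = 0 then ((0 : ℕ), p.1 + 1) else (p.1 + 1, p.2 - 1) := by
    refine Primrec.ite (Primrec.eq.comp (Primrec.snd.comp Primrec.snd) (Primrec.const 0)) ?_ ?_
    · exact (Primrec.const 0).pair (Primrec.succ.comp (Primrec.fst.comp Primrec.snd))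
    · exact (Primrec.succ.comp (Primrec.fst.comp Primrec.snd)).pair
        (Primrec.pred.comp (Primrec.snd.comp Primrec.snd))
  refine (Primrec.nat_rec₁ ((0 : ℕ), (0 : ℕ)) hg).of_eq fun n => ?_
  induction n with
  | zero => rfl
  | succ n ih => simp only [lrAux, ← ih]

theorem primrec_g : Primrec₂ g := by
  have hl : Primrec₂ lstar := by
    have : Primrec₂ fun (_ : ℕ) (p : ℕ × ℕ) => cl p.2 :=
      Primrec.fst.comp (primrec_lrAux.comp (Primrec.snd.comp Primrec.snd))
    refine (Primrec.nat_rec Primrec.id this).of_eq fun x n => ?_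
    induction n with
    | zero => rfl
    | succ n ih => simp only [lstar, ← ih]
  exact Primrec.snd.comp (primrec_lrAux.comp hl)

/-! ### The axioms -/

/-- Uniformly realizable and true everywhere. -/
def GT (φ : PFml) : Prop := Good φ ∧ ∀ ρ, TrueStd ρ φ

theorem gt_bigAnd (l : List PFml) (h : ∀ φ ∈ l, GT φ) : GT (bigAnd l) := by
  induction l with
  | nil => exact ⟨good_imp good_bot.eqv good_bot, fun _ h => h⟩
  | cons φ l ih =>
    have h1 := h φ (by simp)
    have h2 := ih fun ψ hψ => h ψ (by simp [hψ])
    exact ⟨good_and h1.1 h2.1, fun ρ => ⟨h1.2 ρ, h2.2 ρ⟩⟩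

theorem true_vZ (ρ : ℕ → ℕ) (t : PTerm) : TrueStd ρ (vZ t) ↔ t.eval ρ = 0 := Iff.rfl
theorem true_vE (ρ : ℕ → ℕ) (t u : PTerm) : TrueStd ρ (vE t u) ↔ t.eval ρ = u.eval ρ := Iff.rfl
theorem true_vS (ρ : ℕ → ℕ) (t u : PTerm) :
    TrueStd ρ (vS t u) ↔ t.eval ρ + 1 = u.eval ρ := Iff.rfl
theorem true_vA (ρ : ℕ → ℕ) (t u w : PTerm) :
    TrueStd ρ (vA t u w) ↔ t.eval ρ + u.eval ρ = w.eval ρ := Iff.rfl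
theorem true_vM (ρ : ℕ → ℕ) (t u w : PTerm) :
    TrueStd ρ (vM t u w) ↔ t.eval ρ * u.eval ρ = w.eval ρ := Iff.rfl

theorem sd_vZ (t : PTerm) : SD (vZ t) := (dec_atom (.inl ⟨rfl, rfl⟩)).sd
theorem sd_vS (t u : PTerm) : SD (vS t u) := (dec_atom (.inr (.inl ⟨rfl, by omega⟩))).sd
theorem sd_vA (t u w : PTerm) : SD (vA t u w) := (dec_vA t u w).sd
theorem sd_vM (t u w : PTerm) : SD (vM t u w) := (dec_atom (.inr (.inr ⟨rfl, by omega⟩))).sd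

theorem good_IRA : ∀ φ ∈ IRAstarAxioms, Good φ := by
  have aZ : ∀ t, Good (vZ t) := fun t => good_atom _ _
  have aE : ∀ t u, Good (vE t u) := fun t u => good_atom _ _
  have aS : ∀ t u, Good (vS t u) := fun t u => good_atom _ _
  have aA : ∀ t u w, Good (vA t u w) := fun t u w => good_atom _ _
  have aM : ∀ t u w, Good (vM t u w) := fun t u w => good_atom _ _
  have imp' : ∀ {φ ψ : PFml}, Good φ → Good ψ → Good (φ.imp ψ) := fun h1 h2 => good_imp h1.eqv h2
  intro φ hφ
  simp only [IRAstarAxioms, List.mem_cons, List.not_mem_nil, or_false] at hφ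
  rcases hφ with rfl | rfl | rfl | rfl | rfl | rfl | rfl | rfl | rfl | rfl | rfl | rfl | rfl |
    rfl | rfl | rfl | rfl | rfl | rfl | rfl | rfl | rfl | rfl | rfl | rfl
  all_goals first
    | exact good_alls _ (imp' (aS _ _) (good_not (aZ _).eqv))
    | exact good_all _ (good_or (aZ _) (good_ex _ (aS _ _) (sd_vS _ _)) (sd_vZ _)
        (sd_ex _ (sd_vS _ _)))
    | exact good_ex _ (aZ _) (sd_vZ _)
    | exact good_all _ (good_ex _ (aS _ _) (sd_vS _ _))
    | exact good_alls _ (good_ex _ (aA _ _ _) (sd_vA _ _ _))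
    | exact good_alls _ (good_ex _ (aM _ _ _) (sd_vM _ _ _))
    | (refine good_alls _ (imp' ?_ ?_)
       all_goals repeat' (first | with_reducible apply good_and | apply good_atom))

theorem true_IRA : ∀ φ ∈ IRAstarAxioms, ∀ ρ, TrueStd ρ φ := by
  intro φ hφ ρ
  simp only [IRAstarAxioms, List.mem_cons, List.not_mem_nil, or_false] at hφ
  rcases hφ with rfl | rfl | rfl | rfl | rfl | rfl | rfl | rfl | rfl | rfl | rfl | rfl | rfl |
    rfl | rfl | rfl | rfl | rfl | rfl | rfl | rfl | rfl | rfl | rfl | rfl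
  all_goals simp [alls, TrueStd, PFml.not, true_vZ, true_vE, true_vS, true_vA, true_vM,
    PTerm.eval, Function.update]
  · intro a b; omega
  · intro a b; ring
  · intro a b c h; exact .inl h.symm
  · intro a; omega

theorem gt_A26 {G : PFml} (hb : ∀ v ∈ G.bv, 10 ≤ v) (hG : Good G)
    (hd : ∀ ρ : ℕ → ℕ, TrueStd ρ G ↔ K (ρ 0) (ρ 1) = Part.some (ρ 2)) : GT (A26 G) := by
  have hs : Ren (sub1 2 (.var 3)) := by
    constructor
    · intro v hv
      have : v ≠ 2 := by omega
      simp [sub1, this]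
    · intro v hv
      by_cases h : v = 2
      · exact ⟨3, by omega, by simp [sub1, h]⟩
      · exact ⟨v, hv, by simp [sub1, h]⟩
  refine ⟨good_alls _ (good_imp (good_and hG (good_msub hs hb hG)).eqv (good_atom _ _)), ?_⟩
  intro ρ a b c d h
  obtain ⟨h1, h2⟩ := h
  rw [true_msub hs G hb, hd] at h2
  rw [hd] at h1
  simp only [sub1, PTerm.eval, Function.update] at h1 h2
  simp at h1 h2
  rw [h1] at h2
  rw [true_vE]
  simpa [PTerm.eval, Function.update] using h2

theorem gt_A27 {G B : PFml} (hGb : ∀ v ∈ G.bv, 10 ≤ v) (hG : Good G)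
    (hGd : ∀ ρ : ℕ → ℕ, TrueStd ρ G ↔ K (ρ 0) (ρ 1) = Part.some (ρ 2))
    (hBb : ∀ v ∈ B.bv, 10 ≤ v) (hB : Good B)
    (hBd : ∀ ρ : ℕ → ℕ, TrueStd ρ B ↔ g (ρ 0) (ρ 1) = 1)
    (hGs : SD G) : GT (A27 G B) := by
  have hsB : Ren (fun v => if v = 0 then .var 4 else if v = 1 then .var 0 else .var v) := by
    constructor
    · intro v hv
      have h0 : v ≠ 0 := by omega
      have h1 : v ≠ 1 := by omega
      simp [h0, h1]
    · intro v hv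
      dsimp only
      split_ifs
      · exact ⟨4, by omega, rfl⟩
      · exact ⟨0, by omega, rfl⟩
      · exact ⟨v, hv, rfl⟩
  have hsG : Ren (fun v => if v = 0 then .var 1 else if v = 1 then .var 0 else
      if v = 2 then .var 5 else .var v) := by
    constructor
    · intro v hv
      have h0 : v ≠ 0 := by omega
      have h1 : v ≠ 1 := by omega
      have h2 : v ≠ 2 := by omega
      simp [h0, h1, h2]
    · intro v hv
      dsimp only
      split_ifs
      · exact ⟨1, by omega, rfl⟩
      · exact ⟨0, by omega, rfl⟩
      · exact ⟨5, by omega, rfl⟩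
      · exact ⟨v, hv, rfl⟩
  have sdG : SD (G.msub (fun v => if v = 0 then .var 1 else if v = 1 then .var 0 else
      if v = 2 then .var 5 else .var v)) := by
    intro α _ ρ hρ
    obtain ⟨D, hD, h⟩ := hGs α _ (fun v => hρ.term ((fun v => if v = 0 then PTerm.var 1 else
      if v = 1 then .var 0 else if v = 2 then .var 5 else .var v) v))
    exact ⟨D, hD, fun a => (true_msub hsG G hGb _).trans (h a)⟩
  have hBB : Good (B40 B) := good_msub hsB hBb hB
  have hH : Good (Hfml G) := good_ex _ (good_and (good_atom _ _) (good_msub hsG hGb hG))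
    (sd_and (sd_vZ _) sdG)
  constructor
  · refine good_alls _ (good_not (good_not (eqv_ex _ (good_all _ (good_imp (good_leF _ _ _).eqv
      (good_and (good_imp hBB.eqv hH) (good_imp hH.eqv hBB)))).eqv)).eqv)
  · intro ρ y z hn
    apply hn
    obtain ⟨v, hv⟩ := g_enum z fun x => K y x = Part.some 0
    refine ⟨v, fun x hx => ?_⟩
    rw [true_leF (by simp [PTerm.fv]) (by simp [PTerm.fv]) (by omega)] at hx
    have hx' : x ≤ z := by simpa [PTerm.eval, Function.update] using hx
    have e1 : TrueStd (Function.update (Function.update (Function.update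
        (Function.update ρ 1 y) 2 z) 4 v) 0 x) (B40 B) ↔ g v x = 1 := by
      rw [B40, true_msub hsB B hBb, hBd]
      simp [PTerm.eval, Function.update]
    have e2 : TrueStd (Function.update (Function.update (Function.update
        (Function.update ρ 1 y) 2 z) 4 v) 0 x) (Hfml G) ↔ K y x = Part.some 0 := by
      simp only [Hfml, TrueStd, true_msub hsG G hGb, hGd, true_vZ]
      simp [PTerm.eval, Function.update]
    have e3 := (e1.trans (hv x hx')).trans e2.symm
    exact ⟨e3.1, e3.2⟩

theorem gt_A28 {B : PFml} (hB : Good B)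
    (hBd : ∀ ρ : ℕ → ℕ, TrueStd ρ B ↔ g (ρ 0) (ρ 1) = 1) : GT (A28 B) := by
  have dB : Dec B := by
    intro α _ ρ hρ
    exact (Primrec.eq.comp (primrec_g.comp (hρ 0) (hρ 1)) (Primrec.const 1)).of_eq
      fun a => (hBd _).symm
  have dN : Dec B.not := fun α _ ρ hρ => (dB α ρ hρ).not
  exact ⟨good_alls _ (good_or hB (good_not hB.eqv) dB.sd dN.sd), fun ρ x y => em _⟩

end Cpc

/-- the closed arithmetical formula `Q` (the conjunction of `A₁ – A₂₈`)
is realizable under Kleene recursive realizability. -/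
theorem Q_realizable (G B : Cpc.PFml)
    (hGfv : G.fv ⊆ {0, 1, 2}) (hGbv : ∀ v ∈ G.bv, 10 ≤ v) (hGsig : Cpc.IsSigma G)
    (hGdef : ∀ ρ : ℕ → ℕ, Cpc.TrueStd ρ G ↔ Cpc.K (ρ 0) (ρ 1) = Part.some (ρ 2))
    (hBfv : B.fv ⊆ {0, 1}) (hBbv : ∀ v ∈ B.bv, 10 ≤ v) (hBsig : Cpc.IsSigma B)
    (hBdef : ∀ ρ : ℕ → ℕ, Cpc.TrueStd ρ B ↔ Cpc.g (ρ 0) (ρ 1) = 1) :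
    ∃ e, Cpc.Realizes Cpc.stdInterp Cpc.rho0 e (Cpc.Qfml G B) := by
  have hG := Cpc.good_sigma hGsig
  have hB := Cpc.good_sigma hBsig
  have h : Cpc.GT (Cpc.Qfml G B) := by
    apply Cpc.gt_bigAnd
    intro φ hφ
    simp only [List.mem_append, List.mem_cons, List.not_mem_nil, or_false] at hφ
    rcases hφ with hφ | rfl | rfl | rfl
    · exact ⟨Cpc.good_IRA φ hφ, Cpc.true_IRA φ hφ⟩
    · exact Cpc.gt_A26 hGbv hG hGdef
    · exact Cpc.gt_A27 hGbv hG hGdef hBbv hB hBdef (Cpc.sd_sigma hGsig)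
    · exact Cpc.gt_A28 hB hBdef
  exact (h.1.eqv Cpc.rho0).2 (h.2 Cpc.rho0)
end
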